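/- arXiv:1804.01135 — 3 statements merged into one kernel-verified Lean document; each statement's English description precedes it below -/
import Mathlib

section
/- Let Ω ⊂ ℝ^d (d ≥ 1) be a bounded open set, let D_x be C¹ on an open neighborhood of cl(Ω) with a₀ ≤ D_x ≤ A₁ for constants 0 < a₀ ≤ A₁ and |∇D_x| ≤ A₂, let σ_{x,a} be continuous on cl(Ω) with 0 ≤ σ_{x,a} ≤ S̄, and let γ_x, β_x, β_f ∈ ℝ with β_f ≠ 0 and β_f + γ_x ≠ 0; set θ := (β_f - γ_x)/(β_f + γ_x), μ := β_x/β_f - 1 and b := -(2/(1+θ)) σ_{x,a} μ, and assume b ≥ 0 on Ω. Fix constants 0 < K₁₀ < K₉, M > 0, Q̄ > 0. Then there exists a constant K₁₄ > 0, depending only on these data, with the following property: for i = 1, 2, let σ_{x,f,i} be continuous on cl(Ω), let u_{0,i} ∈ C²(Ω) ∩ C¹(cl(Ω)) be positive classical solutions of -∇·(D_x∇u_{0,i}) + (σ_{x,a} + σ_{x,f,i})u_{0,i} = 0 in Ω with u_{0,1} = u_{0,2} on ∂Ω, satisfying K₁₀ ≤ u_{0,i} ≤ K₉ and |∇u_{0,i}|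 ≤ M on cl(Ω); set Q_i := γ_x D_x |∇u_{0,i}|² + (β_x σ_{x,a} + β_f σ_{x,f,i}) u_{0,i}² and c_i := (2/((1+θ)β_f)) Q_i, and assume |Q_i| ≤ Q̄ together with either (θ < 0, θ ≠ -1, and c₁ ≥ 0, c₂ ≥ 0) or (θ ≥ 0 and c₁ ≤ 0, c₂ ≤ 0). Then ‖σ_{x,f,1} - σ_{x,f,2}‖_{L¹(Ω)} ≤ K₁₄ ( ‖Q₁ - Q₂‖_{L¹(Ω)} + ‖Q₁ - Q₂‖_{L²(Ω)} + ‖Q₁ - Q₂‖²_{L²(Ω)} ). -/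
/-!
Write `p = 2 / (1 + θ) = (βf + γx) / βf` and `Ψᵢ = uᵢ ^ p`. The power `p` is chosen so that the
gradient term of the datum `Qᵢ` cancels the one produced by the chain rule: `Ψᵢ` solves
`∇·(D∇Ψᵢ) = bΨᵢ + cᵢ uᵢ^{p-2}` (`divA_rpow_of_pde`), which no longer contains the unknown `σfᵢ`.
The sign conditions on `b`, `θ` and `c₁` make the zeroth-order terms monotone in `Ψ`, so
`w = Ψ₁ - Ψ₂` satisfies `w ∇·(D∇w) ≥ -C₀ |Q₁ - Q₂| |w|` (`reaction_lower_bound`).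

Since `w` vanishes on `∂Ω`, testing with `w` and the Poincaré inequality bound `w` and `∇w` in
`L²(Ω)` by `‖Q₁ - Q₂‖_{L²}` (`energy_bound`). No regularity of `∂Ω` is assumed, so the test function
is a truncation `φ(w)` with `φ = 0` near `0`: it is supported in a compact subset of `Ω`, where
integration by parts has no boundary term (`trunc_energy`). The truncation is removed by dominated
convergence, using that `∇w = 0` almost everywhere on `{w = 0}` (`ae_fderiv_eq_zero`).

Finally `σfᵢ` is an explicit function of `Qᵢ`, `Ψᵢ`, `∇Ψᵢ`, Lipschitz on the admissible range
(`recon`), and the `L¹` norms of `w` and `∇w` are controlled by their `L²` norms because `Ω` is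
bounded.
-/

open Real Set MeasureTheory Filter Topology

/-- Divergence-form operator `∇·(a∇u)(x) = ∑ i ∂_i (a ∂_i u)(x)`. -/
noncomputable def divA {d : ℕ} (a u : EuclideanSpace ℝ (Fin d) → ℝ)
    (x : EuclideanSpace ℝ (Fin d)) : ℝ :=
  ∑ i : Fin d,
    fderiv ℝ (fun y => a y * fderiv ℝ u y (EuclideanSpace.single i (1 : ℝ))) x
      (EuclideanSpace.single i (1 : ℝ))

/-- Squared Euclidean norm of the gradient `|∇u|²(x)`. -/
noncomputable def gradSq {d : ℕ} (u : EuclideanSpace ℝ (Fin d) → ℝ)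
    (x : EuclideanSpace ℝ (Fin d)) : ℝ :=
  ∑ i : Fin d, (fderiv ℝ u x (EuclideanSpace.single i (1 : ℝ))) ^ 2


/-- `L²(Ω)` norm of a function. -/
noncomputable def normL2 {d : ℕ} (Ω : Set (EuclideanSpace ℝ (Fin d)))
    (f : EuclideanSpace ℝ (Fin d) → ℝ) : ℝ :=
  Real.sqrt (∫ x in Ω, (f x) ^ 2)

/-- `H¹(Ω)` norm of a function: `‖w‖² = ∫_Ω (|w|² + |∇w|²)`. -/
noncomputable def normH1 {d : ℕ} (Ω : Set (EuclideanSpace ℝ (Fin d)))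
    (f : EuclideanSpace ℝ (Fin d) → ℝ) : ℝ :=
  Real.sqrt (∫ x in Ω, ((f x) ^ 2 + ‖fderiv ℝ f x‖ ^ 2))

/-- `L¹(Ω)` norm of a function. -/
noncomputable def normL1 {d : ℕ} (Ω : Set (EuclideanSpace ℝ (Fin d)))
    (f : EuclideanSpace ℝ (Fin d) → ℝ) : ℝ :=
  ∫ x in Ω, |f x|

/-! ### Truncation, divergence theorem and integrals -/

/-- A `C¹` truncation `φ` of the identity with derivative `k ∈ [0, 1]`, vanishing on `[-ε, ε]` and
within `2ε` of the identity. -/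
theorem exists_trunc (ε : ℝ) (hε : 0 < ε) : ∃ φ k : ℝ → ℝ, Continuous k ∧
    (∀ s, HasDerivAt φ (k s) s) ∧ (∀ s, 0 ≤ k s) ∧ (∀ s, k s ≤ 1) ∧
    (∀ s, |s| ≤ ε → φ s = 0) ∧ (∀ s, 2 * ε ≤ |s| → k s = 1) ∧
    (∀ s, 0 ≤ φ s * s) ∧ (∀ s, |φ s| ≤ |s|) ∧ (∀ s, |φ s - s| ≤ 2 * ε) := by
  obtain ⟨k, hk⟩ : ∃ k : ℝ → ℝ, k = fun t => min 1 (max 0 (|t| / ε - 1)) := ⟨_, rfl⟩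
  have hkc : Continuous k := by rw [hk]; fun_prop
  have hk0 : ∀ s, 0 ≤ k s := fun s => by rw [hk]; positivity
  have hk1 : ∀ s, k s ≤ 1 := fun s => by rw [hk]; exact min_le_left _ _
  have hkz : ∀ s, |s| ≤ ε → k s = 0 := fun s hs => by
    have : |s| / ε - 1 ≤ 0 := by
      rw [sub_nonpos, div_le_one hε]; exact hs
    simp [hk, max_eq_left this]
  have hko : ∀ s, 2 * ε ≤ |s| → k s = 1 := fun s hs => by
    have : 1 ≤ |s| / ε - 1 := by
      rw [le_sub_iff_add_le, le_div_iff₀ hε]; linarith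
    simp only [hk]
    rw [max_eq_right (by linarith), min_eq_left this]
  have hd : ∀ s, HasDerivAt (fun s => ∫ t in (0 : ℝ)..s, k t) (k s) s := fun s =>
    (hkc.integral_hasStrictDerivAt 0 s).hasDerivAt
  have hodd : ∀ s, (∫ t in (0 : ℝ)..(-s), k t) = -∫ t in (0 : ℝ)..s, k t := fun s => by
    have h := intervalIntegral.integral_comp_neg (a := 0) (b := s) k
    have h2 : ∀ t, k (-t) = k t := fun t => by simp [hk]
    simp only [h2, neg_zero] at h
    rw [h, intervalIntegral.integral_symm]
  have hint : ∀ a b, IntervalIntegrable k volume a b := fun a b => hkc.intervalIntegrable a b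
  -- by oddness, all bounds need only be checked on the half-line `0 ≤ s`
  have hpos : ∀ s, 0 ≤ s → 0 ≤ (∫ t in (0 : ℝ)..s, k t) ∧ (∫ t in (0 : ℝ)..s, k t) ≤ s ∧
      s - 2 * ε ≤ (∫ t in (0 : ℝ)..s, k t) ∧ (s ≤ ε → (∫ t in (0 : ℝ)..s, k t) = 0) := by
    intro s hs
    have h0 : ∀ s, 0 ≤ s → 0 ≤ (∫ t in (0 : ℝ)..s, k t) := fun s hs =>
      intervalIntegral.integral_nonneg hs (fun t _ => hk0 t)
    refine ⟨h0 s hs, ?_, ?_, ?_⟩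
    · have := intervalIntegral.integral_mono_on hs (hint 0 s) (_root_.intervalIntegrable_const
        (c := (1 : ℝ))) (fun t _ => hk1 t)
      simpa using this
    · rcases le_total s (2 * ε) with h | h
      · linarith [h0 s hs]
      · rw [← intervalIntegral.integral_add_adjacent_intervals (hint 0 (2 * ε)) (hint (2 * ε) s)]
        have h2 : (∫ t in (2 * ε)..s, k t) = ∫ t in (2 * ε)..s, (1 : ℝ) := by
          apply intervalIntegral.integral_congr
          intro t ht
          rw [uIcc_of_le h] at ht
          exact hko t (ht.1.trans (le_abs_self t))
        rw [h2]
        have := h0 (2 * ε) (by positivity)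
        simp
        linarith
    · intro hsε
      have h2 : (∫ t in (0 : ℝ)..s, k t) = ∫ t in (0 : ℝ)..s, (0 : ℝ) := by
        apply intervalIntegral.integral_congr
        intro t ht
        rw [uIcc_of_le hs] at ht
        exact hkz t (by rw [abs_of_nonneg ht.1]; linarith [ht.2])
      rw [h2]; simp
  refine ⟨fun s => ∫ t in (0 : ℝ)..s, k t, k, hkc, hd, hk0, hk1, ?_, hko, ?_, ?_, ?_⟩
  all_goals
    intro s
    simp only
    rcases le_total 0 s with hs | hs
    · obtain ⟨h1, h2, h3, h4⟩ := hpos s hs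
      first
        | (rw [abs_of_nonneg hs]; exact h4)
        | exact mul_nonneg h1 hs
        | (rw [abs_of_nonneg hs, abs_of_nonneg h1]; exact h2)
        | (rw [abs_le]; constructor <;> linarith)
    · obtain ⟨h1, h2, h3, h4⟩ := hpos (-s) (by linarith)
      rw [hodd] at h1 h2 h3 h4
      first
        | (rw [abs_of_nonpos hs]; intro h; linarith [h4 h])
        | exact mul_nonneg_of_nonpos_of_nonpos (by linarith) hs
        | (rw [abs_of_nonpos hs, abs_of_nonpos (by linarith)]; linarith)
        | (rw [abs_le]; constructor <;> linarith)

/-- Divergence theorem without boundary term: the function need only be defined and `C¹` on `Ω`,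
since vanishing off a compact subset of `Ω` lets it be extended by zero. -/
theorem integral_fderiv_eq_zero_of_vanish {d : ℕ} {Ω K : Set (EuclideanSpace ℝ (Fin d))}
    (hΩ : IsOpen Ω) (hK : IsCompact K) (hKΩ : K ⊆ Ω) {g : EuclideanSpace ℝ (Fin d) → ℝ}
    (hg : ContDiffOn ℝ 1 g Ω) (hz : ∀ x ∈ Ω, x ∉ K → g x = 0) (v : EuclideanSpace ℝ (Fin d)) :
    IntegrableOn (fun x => fderiv ℝ g x v) Ω ∧ ∫ x in Ω, fderiv ℝ g x v = 0 := by
  obtain ⟨G, hG⟩ : ∃ G, G = Ω.indicator g := ⟨_, rfl⟩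
  have h1 : ∀ x ∈ Ω, G =ᶠ[𝓝 x] g := fun x hx => by
    filter_upwards [hΩ.mem_nhds hx] with y hy
    simp [hG, hy]
  have h2 : ∀ x ∉ K, G =ᶠ[𝓝 x] fun _ => 0 := fun x hx => by
    filter_upwards [hK.isClosed.isOpen_compl.mem_nhds hx] with y hy
    by_cases hyΩ : y ∈ Ω
    · simp [hG, hyΩ, hz y hyΩ hy]
    · simp [hG, hyΩ]
  have hGc : ContDiff ℝ 1 G := by
    rw [contDiff_iff_contDiffAt]
    intro x
    by_cases hx : x ∈ K
    · exact (hg.contDiffAt (hΩ.mem_nhds (hKΩ hx))).congr_of_eventuallyEq (h1 x (hKΩ hx))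
    · exact contDiffAt_const.congr_of_eventuallyEq (h2 x hx)
  have hGs : HasCompactSupport G := HasCompactSupport.intro hK fun x hx => (h2 x hx).self_of_nhds
  have hG's : HasCompactSupport (fun x => fderiv ℝ G x v) := hGs.fderiv_apply ℝ v
  have hG'c : Continuous (fun x => fderiv ℝ G x v) :=
    (hGc.continuous_fderiv (by norm_num)).clm_apply continuous_const
  have hint : Integrable (fun x => fderiv ℝ G x v) := hG'c.integrable_of_hasCompactSupport hG's
  have heq : EqOn (fun x => fderiv ℝ G x v) (fun x => fderiv ℝ g x v) Ω := fun x hx => by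
    simp only [(h1 x hx).fderiv_eq]
  refine ⟨hint.integrableOn.congr_fun heq hΩ.measurableSet, ?_⟩
  rw [← setIntegral_congr_fun hΩ.measurableSet heq, setIntegral_eq_integral_of_forall_compl_eq_zero]
  · have := integral_mul_fderiv_eq_neg_fderiv_mul_of_integrable (μ := volume) (𝕜 := ℝ)
      (f := fun _ => 1) (g := G) (v := v) (by simp) (by simpa using hint)
      (by simpa using hGc.continuous.integrable_of_hasCompactSupport hGs) (by simp)
      (fun x _ => hGc.differentiable (by norm_num) x)
    simpa using this
  · intro x hx
    rw [(h2 x (fun h => hx (hKΩ h))).fderiv_eq]; simp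

/-- The gradient of a differentiable function vanishes almost everywhere on its zero set: at a
density point of that set, `w` is approximated to first order by the zero map. -/
theorem ae_fderiv_eq_zero {d : ℕ} (hd : 1 ≤ d) {Ω : Set (EuclideanSpace ℝ (Fin d))}
    (hΩ : IsOpen Ω) {w : EuclideanSpace ℝ (Fin d) → ℝ} (hw : DifferentiableOn ℝ w Ω) :
    ∀ᵐ x ∂(volume.restrict Ω), w x = 0 → fderiv ℝ w x = 0 := by
  obtain ⟨s, hs⟩ : ∃ s, s = {x ∈ Ω | w x = 0} := ⟨_, rfl⟩
  have hsm : MeasurableSet s := by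
    have : s = Ω \ (Ω ∩ w ⁻¹' {0}ᶜ) := by ext x; simp [hs]
    rw [this]
    exact hΩ.measurableSet.diff
      (hw.continuousOn.isOpen_inter_preimage hΩ isOpen_compl_singleton).measurableSet
  let e : EuclideanSpace ℝ (Fin d) := EuclideanSpace.single ⟨0, hd⟩ 1
  have he : ‖e‖ = 1 := by simp [e]
  have h := ApproximatesLinearOn.norm_fderiv_sub_le (μ := volume) (f := fun x => w x • e)
    (A := 0) (δ := 0) (s := s) (by
      intro x hx y hy
      rw [hs] at hx hy
      simp [hx.2, hy.2]) hsm (fun x => (fderiv ℝ w x).smulRight e) (by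
      intro x hx
      rw [hs] at hx
      exact (((hw.differentiableAt (hΩ.mem_nhds hx.1)).hasFDerivAt).smul_const e).hasFDerivWithinAt)
  rw [ae_restrict_iff' hsm] at h
  rw [ae_restrict_iff' hΩ.measurableSet]
  filter_upwards [h] with x hx hxΩ hwx
  have h3 := hx (by rw [hs]; exact ⟨hxΩ, hwx⟩)
  have h4 : ‖(fderiv ℝ w x).smulRight e‖ = 0 := by
    have : ‖(fderiv ℝ w x).smulRight e‖₊ = 0 := by simpa using h3
    simpa using this
  rw [ContinuousLinearMap.norm_smulRight_apply, he, mul_one] at h4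
  exact norm_eq_zero.mp h4

theorem integrableOn_of_cont_bdd {d : ℕ} {Ω : Set (EuclideanSpace ℝ (Fin d))}
    (hΩ : IsOpen Ω) (hb : Bornology.IsBounded Ω) {f : EuclideanSpace ℝ (Fin d) → ℝ}
    (hf : ContinuousOn f Ω) (B : ℝ) (hB : ∀ x ∈ Ω, |f x| ≤ B) : IntegrableOn f Ω :=
  IntegrableOn.of_bound hb.measure_lt_top (hf.aestronglyMeasurable hΩ.measurableSet) B
    ((ae_restrict_iff' hΩ.measurableSet).mpr (Eventually.of_forall hB))

/-- Cauchy–Schwarz in the form `∫ f² ≤ C N² ⟹ ∫ |f| ≤ (|Ω| + C) N`, by Young's inequality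
`2 |f| ≤ t + f² / t` with `t` slightly larger than `N`. -/
theorem integral_abs_le_of_sq {d : ℕ} {Ω : Set (EuclideanSpace ℝ (Fin d))}
    (hb : Bornology.IsBounded Ω) {f : EuclideanSpace ℝ (Fin d) → ℝ}
    (hf : IntegrableOn f Ω) (hf2 : IntegrableOn (fun x => f x ^ 2) Ω) {C N : ℝ} (hC : 0 ≤ C)
    (hN : 0 ≤ N) (h : ∫ x in Ω, f x ^ 2 ≤ C * N ^ 2) :
    ∫ x in Ω, |f x| ≤ (volume.real Ω + C) * N := by
  have hV : 0 ≤ volume.real Ω := measureReal_nonneg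
  have key : ∀ δ > 0, ∫ x in Ω, |f x| ≤ (volume.real Ω + C) * (N + δ) := by
    intro δ hδ
    have ht : 0 < N + δ := by positivity
    have hc : IntegrableOn (fun _ : EuclideanSpace ℝ (Fin d) => (N + δ)) Ω :=
      integrableOn_const hb.measure_lt_top.ne
    have h1 : ∫ x in Ω, |f x| ≤ ∫ x in Ω, ((N + δ) + f x ^ 2 * (N + δ)⁻¹) := by
      apply integral_mono hf.abs (hc.add (hf2.mul_const _))
      intro x
      have : (N + δ) + f x ^ 2 * (N + δ)⁻¹ - |f x| = ((N + δ) ^ 2 + |f x| ^ 2 - |f x| * (N + δ)) / (N + δ) := by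
        rw [sq_abs]; field_simp
      have h3 : 0 ≤ ((N + δ) ^ 2 + |f x| ^ 2 - |f x| * (N + δ)) / (N + δ) := by
        apply div_nonneg _ ht.le
        nlinarith [sq_nonneg (|f x| - (N + δ)), abs_nonneg (f x)]
      simp only [Pi.add_apply]
      linarith
    rw [integral_add hc (hf2.mul_const _), integral_mul_const] at h1
    simp only [integral_const, smul_eq_mul, measureReal_restrict_apply_univ] at h1
    have h2 : (∫ x in Ω, f x ^ 2) * (N + δ)⁻¹ ≤ C * (N + δ) := by
      rw [← div_eq_mul_inv, div_le_iff₀ ht]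
      have : N ^ 2 ≤ (N + δ) * (N + δ) := by nlinarith
      nlinarith
    nlinarith
  have hlim := ((tendsto_one_div_add_atTop_nhds_zero_nat (𝕜 := ℝ)).const_add N).const_mul
    (volume.real Ω + C)
  rw [add_zero] at hlim
  exact ge_of_tendsto' hlim (fun n => key _ (by positivity))

/-! ### Energy estimate -/

/-- Energy and Poincaré estimates for the truncation `φ ∘ w`, with constants independent of `φ`, of
its threshold `ε`, and of the a priori bound `B`, which serves only integrability. -/
theorem trunc_energy {d : ℕ} (hd : 1 ≤ d) {Ω : Set (EuclideanSpace ℝ (Fin d))}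
    (hΩ : IsOpen Ω) (hb : Bornology.IsBounded Ω) {R a₀ C₀ B ε : ℝ} (hR : 0 < R)
    (hRΩ : ∀ x ∈ Ω, |x ⟨0, hd⟩| ≤ R) (ha₀ : 0 < a₀) (hε : 0 < ε)
    {D w f : EuclideanSpace ℝ (Fin d) → ℝ}
    (hD : ContDiffOn ℝ 1 D Ω) (hDa : ∀ x ∈ Ω, a₀ ≤ D x)
    (hw : ContDiffOn ℝ 2 w Ω) (hwc : ContinuousOn w (closure Ω))
    (hw0 : ∀ x ∈ frontier Ω, w x = 0) (hwB : ∀ x ∈ Ω, |w x| ≤ B)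
    (hwB' : ∀ x ∈ Ω, ∀ i, |fderiv ℝ w x (EuclideanSpace.single i 1)| ≤ B)
    (hf2 : IntegrableOn (fun x => f x ^ 2) Ω)
    (hdiv : ∀ x ∈ Ω, -(C₀ * |f x| * |w x|) ≤ divA D w x * w x)
    {φ k : ℝ → ℝ} (hkc : Continuous k) (hφ : ∀ s, HasDerivAt φ (k s) s) (hk0 : ∀ s, 0 ≤ k s)
    (hk1 : ∀ s, k s ≤ 1) (hφz : ∀ s, |s| ≤ ε → φ s = 0) (hφs : ∀ s, 0 ≤ φ s * s)
    (hφl : ∀ s, |φ s| ≤ |s|) :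
    ∫ x in Ω, k (w x) * gradSq w x ≤ 4 * R ^ 2 * C₀ ^ 2 / a₀ ^ 2 * ∫ x in Ω, f x ^ 2 ∧
    ∫ x in Ω, φ (w x) ^ 2 ≤ 4 * R ^ 2 * ∫ x in Ω, k (w x) * gradSq w x := by
  have hφ1 : ContDiff ℝ 1 φ := by
    rw [contDiff_one_iff_deriv]
    refine ⟨fun s => (hφ s).differentiableAt, ?_⟩
    rw [show deriv φ = k from funext fun s => (hφ s).deriv]
    exact hkc
  have hw1 : ContDiffOn ℝ 1 w Ω := hw.of_le (by norm_num)
  have hφw : ContDiffOn ℝ 1 (fun x => φ (w x)) Ω := hφ1.comp_contDiffOn hw1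
  have hwd : ∀ x ∈ Ω, DifferentiableAt ℝ w x := fun x hx =>
    (hw1.contDiffAt (hΩ.mem_nhds hx)).differentiableAt (by norm_num)
  have hpd : ∀ i : Fin d, ContDiffOn ℝ 1
      (fun x => fderiv ℝ w x (EuclideanSpace.single i 1)) Ω := fun i =>
    (hw.fderiv_of_isOpen hΩ (by norm_num)).clm_apply contDiffOn_const
  have hG : ContinuousOn (gradSq w) Ω := by
    unfold gradSq
    exact continuousOn_finsetSum _ fun i _ => (hpd i).continuousOn.pow 2
  have hG0 : ∀ x, 0 ≤ gradSq w x := fun x => Finset.sum_nonneg fun i _ => sq_nonneg _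
  have hGB : ∀ x ∈ Ω, gradSq w x ≤ d * B ^ 2 := fun x hx => by
    have : gradSq w x ≤ ∑ i : Fin d, B ^ 2 := Finset.sum_le_sum fun i _ =>
      sq_le_sq.mpr ((hwB' x hx i).trans (le_abs_self B))
    simpa using this
  have hkGi : IntegrableOn (fun x => k (w x) * gradSq w x) Ω := by
    apply integrableOn_of_cont_bdd hΩ hb ((hkc.comp_continuousOn hw1.continuousOn).mul hG)
      (d * B ^ 2)
    intro x hx
    change |k (w x) * gradSq w x| ≤ _
    rw [abs_of_nonneg (mul_nonneg (hk0 _) (hG0 x))]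
    nlinarith [hk1 (w x), hG0 x, hGB x hx, hk0 (w x)]
  have hφi : IntegrableOn (fun x => φ (w x) ^ 2) Ω := by
    apply integrableOn_of_cont_bdd hΩ hb (hφw.continuousOn.pow 2) (B ^ 2)
    intro x hx
    rw [abs_of_nonneg (sq_nonneg _)]
    exact sq_le_sq.mpr (((hφl _).trans (hwB x hx)).trans (le_abs_self B))
  -- `φ ∘ w` is supported in the superlevel set `{ε ≤ |w|}`, a compact subset of `Ω`
  obtain ⟨K, hK⟩ : ∃ K, K = {x ∈ closure Ω | ε ≤ |w x|} := ⟨_, rfl⟩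
  have hKc : IsCompact K := by
    have hcl : IsClosed K := by
      rw [hK]
      exact isClosed_closure.isClosed_le continuousOn_const hwc.abs
    exact hb.isCompact_closure.of_isClosed_subset hcl (by rw [hK]; exact fun x hx => hx.1)
  have hKΩ : K ⊆ Ω := by
    intro x hx
    rw [hK] at hx
    by_contra h
    have : x ∈ frontier Ω := by rw [frontier, hΩ.interior_eq]; exact ⟨hx.1, h⟩
    have h2 := hx.2
    rw [hw0 x this, abs_zero] at h2
    linarith
  have hKz : ∀ x ∈ Ω, x ∉ K → φ (w x) = 0 := by
    intro x hx hxK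
    apply hφz
    by_contra h
    exact hxK (by rw [hK]; exact ⟨subset_closure hx, (not_le.mp h).le⟩)
  have hφwd : ∀ x ∈ Ω, HasFDerivAt (fun y => φ (w y)) (k (w x) • fderiv ℝ w x) x := fun x hx =>
    (hφ (w x)).comp_hasFDerivAt x (hwd x hx).hasFDerivAt
  -- energy identity, tested with `φ ∘ w`
  have hE : ∀ η > 0, a₀ * ∫ x in Ω, k (w x) * gradSq w x ≤
      η * (∫ x in Ω, φ (w x) ^ 2) + C₀ ^ 2 / (4 * η) * ∫ x in Ω, f x ^ 2 := by
    intro η hη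
    have hDp : ∀ i : Fin d, ContDiffOn ℝ 1
        (fun y => D y * fderiv ℝ w y (EuclideanSpace.single i 1)) Ω := fun i => hD.mul (hpd i)
    have h0 := fun i : Fin d => integral_fderiv_eq_zero_of_vanish hΩ hKc hKΩ
      (g := fun y => φ (w y) * (D y * fderiv ℝ w y (EuclideanSpace.single i 1)))
      (hφw.mul (hDp i)) (fun x hx hxK => by simp [hKz x hx hxK]) (EuclideanSpace.single i 1)
    have hsum : ∫ x in Ω, ∑ i : Fin d, fderiv ℝ
        (fun y => φ (w y) * (D y * fderiv ℝ w y (EuclideanSpace.single i 1))) x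
        (EuclideanSpace.single i 1) = 0 := by
      rw [integral_finsetSum _ fun i _ => (h0 i).1]
      exact Finset.sum_eq_zero fun i _ => (h0 i).2
    have hpt : ∀ x ∈ Ω, ∑ i : Fin d, fderiv ℝ
        (fun y => φ (w y) * (D y * fderiv ℝ w y (EuclideanSpace.single i 1))) x
        (EuclideanSpace.single i 1) = k (w x) * D x * gradSq w x + φ (w x) * divA D w x := by
      intro x hx
      rw [divA, gradSq, Finset.mul_sum, Finset.mul_sum, ← Finset.sum_add_distrib]
      refine Finset.sum_congr rfl fun i _ => ?_
      have h1 := (hφwd x hx).fun_mul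
        (((hDp i).contDiffAt (hΩ.mem_nhds hx)).differentiableAt (by norm_num)).hasFDerivAt
      rw [h1.fderiv]
      simp
      ring
    have hle : ∫ x in Ω, (a₀ * (k (w x) * gradSq w x) - η * φ (w x) ^ 2
        - C₀ ^ 2 / (4 * η) * f x ^ 2) ≤ 0 := by
      rw [← hsum]
      refine setIntegral_mono_on (((hkGi.const_mul a₀).sub (hφi.const_mul η)).sub
        (hf2.const_mul _)) (integrable_finsetSum _ fun i _ => (h0 i).1) hΩ.measurableSet ?_
      intro x hx
      rw [hpt x hx]
      have h1 : a₀ * (k (w x) * gradSq w x) ≤ k (w x) * D x * gradSq w x := by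
        have := mul_le_mul_of_nonneg_right (hDa x hx) (mul_nonneg (hk0 (w x)) (hG0 x))
        linarith
      have h2 : -(C₀ * |f x| * |φ (w x)|) ≤ φ (w x) * divA D w x := by
        by_cases hwx : w x = 0
        · have : φ (w x) = 0 := hφz _ (by rw [hwx, abs_zero]; exact hε.le)
          simp [this]
        · have hp : 0 < |w x| := abs_pos.mpr hwx
          have h3 : |φ (w x)| * |w x| = φ (w x) * w x := by
            rw [← abs_mul, abs_of_nonneg (hφs _)]
          have h4 := mul_le_mul_of_nonneg_left (hdiv x hx) (abs_nonneg (φ (w x)))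
          have h5 : |w x| * |w x| = w x * w x := abs_mul_abs_self _
          have h6 : |φ (w x)| * w x = φ (w x) * |w x| := by
            apply mul_right_cancel₀ hp.ne'
            calc |φ (w x)| * w x * |w x| = (|φ (w x)| * |w x|) * w x := by ring
              _ = φ (w x) * (w x * w x) := by rw [h3]; ring
              _ = _ := by rw [← h5]; ring
          have h7 : |w x| * (-(C₀ * |f x| * |φ (w x)|)) ≤ |w x| * (φ (w x) * divA D w x) := by
            calc |w x| * (-(C₀ * |f x| * |φ (w x)|))
                = |φ (w x)| * -(C₀ * |f x| * |w x|) := by ring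
              _ ≤ |φ (w x)| * (divA D w x * w x) := h4
              _ = (|φ (w x)| * w x) * divA D w x := by ring
              _ = _ := by rw [h6]; ring
          exact le_of_mul_le_mul_left h7 hp
      have h3 : C₀ * |f x| * |φ (w x)| ≤ η * φ (w x) ^ 2 + C₀ ^ 2 / (4 * η) * f x ^ 2 := by
        rw [← sq_abs (φ (w x)), ← sq_abs (f x)]
        have : η * |φ (w x)| ^ 2 + C₀ ^ 2 / (4 * η) * |f x| ^ 2 - C₀ * |f x| * |φ (w x)|
            = (2 * η * |φ (w x)| - C₀ * |f x|) ^ 2 / (4 * η) := by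
          field_simp; ring
        have h4 : 0 ≤ (2 * η * |φ (w x)| - C₀ * |f x|) ^ 2 / (4 * η) := by positivity
        linarith
      linarith
    have hi1 : IntegrableOn (fun x => a₀ * (k (w x) * gradSq w x) - η * φ (w x) ^ 2) Ω :=
      (hkGi.const_mul a₀).sub (hφi.const_mul η)
    rw [integral_sub hi1 (hf2.const_mul _),
      integral_sub (hkGi.const_mul a₀) (hφi.const_mul η)] at hle
    simp only [integral_const_mul] at hle
    linarith
  -- Poincaré inequality, from the divergence of `x₀ φ(w)²`
  have hP : ∫ x in Ω, φ (w x) ^ 2 ≤ 4 * R ^ 2 * ∫ x in Ω, k (w x) * gradSq w x := by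
    obtain ⟨i, hi⟩ : ∃ i : Fin d, i = ⟨0, hd⟩ := ⟨_, rfl⟩
    rw [← hi] at hRΩ
    have hx0 : ContDiff ℝ 1 (fun x : EuclideanSpace ℝ (Fin d) => x i) := by fun_prop
    obtain ⟨hint, hzero⟩ := integral_fderiv_eq_zero_of_vanish hΩ hKc hKΩ
      (g := fun y => y i * φ (w y) ^ 2) (hx0.contDiffOn.mul (hφw.pow 2))
      (fun x hx hxK => by simp [hKz x hx hxK]) (EuclideanSpace.single i 1)
    have hle : ∫ x in Ω, (1 / 2 * φ (w x) ^ 2 - 2 * R ^ 2 * (k (w x) * gradSq w x)) ≤ 0 := by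
      rw [← hzero]
      refine setIntegral_mono_on ((hφi.const_mul _).sub (hkGi.const_mul _)) hint
        hΩ.measurableSet ?_
      intro x hx
      have hpr : HasFDerivAt (fun y : EuclideanSpace ℝ (Fin d) => y i)
          (EuclideanSpace.proj i : EuclideanSpace ℝ (Fin d) →L[ℝ] ℝ) x :=
        (EuclideanSpace.proj i : EuclideanSpace ℝ (Fin d) →L[ℝ] ℝ).hasFDerivAt
      have h1 := hpr.fun_mul ((hφwd x hx).pow 2)
      rw [h1.fderiv]
      simp
      obtain ⟨p, hp⟩ : ∃ p, p = fderiv ℝ w x (EuclideanSpace.single i 1) := ⟨_, rfl⟩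
      have hpG : p ^ 2 ≤ gradSq w x := by
        rw [hp]
        exact Finset.single_le_sum (f := fun j => (fderiv ℝ w x (EuclideanSpace.single j 1)) ^ 2)
          (fun j _ => sq_nonneg _) (Finset.mem_univ i)
      rw [← hp]
      have hxR : x i ^ 2 ≤ R ^ 2 := sq_le_sq.mpr ((hRΩ x hx).trans (le_abs_self R))
      have hkk : k (w x) ^ 2 * p ^ 2 ≤ k (w x) * gradSq w x := by
        have : k (w x) ^ 2 ≤ k (w x) := by nlinarith [hk0 (w x), hk1 (w x)]
        exact mul_le_mul this hpG (sq_nonneg _) (hk0 _)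
      have h5 : x i ^ 2 * (k (w x) ^ 2 * p ^ 2) ≤ R ^ 2 * (k (w x) * gradSq w x) :=
        mul_le_mul hxR hkk (by positivity) (by positivity)
      nlinarith [sq_nonneg (φ (w x) + 2 * x i * k (w x) * p)]
    rw [integral_sub (hφi.const_mul _) (hkGi.const_mul _)] at hle
    simp only [integral_const_mul] at hle
    linarith
  refine ⟨?_, hP⟩
  -- this choice of `η` lets Poincaré absorb half of the left-hand side
  have h1 := hE (a₀ / (8 * R ^ 2)) (by positivity)
  have h2 := mul_le_mul_of_nonneg_left hP (show 0 ≤ a₀ / (8 * R ^ 2) by positivity)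
  have h3 : a₀ / (8 * R ^ 2) * (4 * R ^ 2 * ∫ x in Ω, k (w x) * gradSq w x)
      = a₀ / 2 * ∫ x in Ω, k (w x) * gradSq w x := by field_simp; ring
  have h4 : C₀ ^ 2 / (4 * (a₀ / (8 * R ^ 2))) * ∫ x in Ω, f x ^ 2
      = a₀ / 2 * (4 * R ^ 2 * C₀ ^ 2 / a₀ ^ 2 * ∫ x in Ω, f x ^ 2) := by field_simp; ring
  have h5 : a₀ / 2 * ∫ x in Ω, k (w x) * gradSq w x ≤
      a₀ / 2 * (4 * R ^ 2 * C₀ ^ 2 / a₀ ^ 2 * ∫ x in Ω, f x ^ 2) := by linarith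
  exact le_of_mul_le_mul_left h5 (by positivity)

/-- `H¹` stability: the limit of `trunc_energy` as the truncation threshold tends to `0`. -/
theorem energy_bound {d : ℕ} (hd : 1 ≤ d) {Ω : Set (EuclideanSpace ℝ (Fin d))}
    (hΩ : IsOpen Ω) (hb : Bornology.IsBounded Ω) {R a₀ C₀ B : ℝ} (hR : 0 < R)
    (hRΩ : ∀ x ∈ Ω, |x ⟨0, hd⟩| ≤ R) (ha₀ : 0 < a₀)
    {D w f : EuclideanSpace ℝ (Fin d) → ℝ}
    (hD : ContDiffOn ℝ 1 D Ω) (hDa : ∀ x ∈ Ω, a₀ ≤ D x)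
    (hw : ContDiffOn ℝ 2 w Ω) (hwc : ContinuousOn w (closure Ω))
    (hw0 : ∀ x ∈ frontier Ω, w x = 0) (hwB : ∀ x ∈ Ω, |w x| ≤ B)
    (hwB' : ∀ x ∈ Ω, ∀ i, |fderiv ℝ w x (EuclideanSpace.single i 1)| ≤ B)
    (hf2 : IntegrableOn (fun x => f x ^ 2) Ω)
    (hdiv : ∀ x ∈ Ω, -(C₀ * |f x| * |w x|) ≤ divA D w x * w x) :
    ∫ x in Ω, w x ^ 2 ≤ 4 * R ^ 2 * (4 * R ^ 2 * C₀ ^ 2 / a₀ ^ 2) * ∫ x in Ω, f x ^ 2 ∧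
    ∀ i, ∫ x in Ω, fderiv ℝ w x (EuclideanSpace.single i 1) ^ 2 ≤
      (4 * R ^ 2 * C₀ ^ 2 / a₀ ^ 2) * ∫ x in Ω, f x ^ 2 := by
  have hεn : ∀ n : ℕ, (0 : ℝ) < 1 / ((n : ℝ) + 1) := fun n => by positivity
  choose φ k hkc hφ hk0 hk1 hφz hko hφs hφl hφa using fun n : ℕ => exists_trunc _ (hεn n)
  have hmain := fun n => trunc_energy hd hΩ hb hR hRΩ ha₀ (hεn n) hD hDa hw hwc hw0 hwB hwB' hf2
    hdiv (hkc n) (hφ n) (hk0 n) (hk1 n) (hφz n) (hφs n) (hφl n)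
  have hε0 : Tendsto (fun n : ℕ => 2 * (1 / ((n : ℝ) + 1))) atTop (𝓝 0) := by
    simpa using (tendsto_one_div_add_atTop_nhds_zero_nat (𝕜 := ℝ)).const_mul 2
  have hw1 : ContDiffOn ℝ 1 w Ω := hw.of_le (by norm_num)
  have hwd : DifferentiableOn ℝ w Ω := hw1.differentiableOn (by norm_num)
  have hpd : ∀ i : Fin d, ContinuousOn
      (fun x => fderiv ℝ w x (EuclideanSpace.single i 1)) Ω := fun i =>
    (hw1.continuousOn_fderiv_of_isOpen hΩ (by norm_num)).clm_apply continuousOn_const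
  have hG : ContinuousOn (gradSq w) Ω := by
    unfold gradSq
    exact continuousOn_finsetSum _ fun i _ => (hpd i).pow 2
  have hG0 : ∀ x, 0 ≤ gradSq w x := fun x => Finset.sum_nonneg fun i _ => sq_nonneg _
  have hGB : ∀ x ∈ Ω, gradSq w x ≤ d * B ^ 2 := fun x hx => by
    have : gradSq w x ≤ ∑ i : Fin d, B ^ 2 := Finset.sum_le_sum fun i _ =>
      sq_le_sq.mpr ((hwB' x hx i).trans (le_abs_self B))
    simpa using this
  have hφc : ∀ n, Continuous (φ n) := fun n =>
    continuous_iff_continuousAt.mpr fun s => (hφ n s).continuousAt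
  have hcst : ∀ c : ℝ, IntegrableOn (fun _ : EuclideanSpace ℝ (Fin d) => c) Ω := fun c =>
    integrableOn_const hb.measure_lt_top.ne
  have hlimG : Tendsto (fun n => ∫ x in Ω, k n (w x) * gradSq w x) atTop
      (𝓝 (∫ x in Ω, gradSq w x)) := by
    refine tendsto_integral_of_dominated_convergence (fun _ => d * B ^ 2) (fun n => ?_)
      (hcst _) (fun n => ?_) ?_
    · exact (((hkc n).comp_continuousOn hw1.continuousOn).mul hG).aestronglyMeasurable
        hΩ.measurableSet
    · rw [ae_restrict_iff' hΩ.measurableSet]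
      refine Eventually.of_forall fun x hx => ?_
      rw [Real.norm_eq_abs, abs_of_nonneg (mul_nonneg (hk0 n _) (hG0 x))]
      nlinarith [hk1 n (w x), hG0 x, hGB x hx, hk0 n (w x)]
    · filter_upwards [ae_fderiv_eq_zero hd hΩ hwd] with x hx
      by_cases hwx : w x = 0
      · -- almost everywhere on `{w = 0}` the gradient vanishes too
        have : gradSq w x = 0 := by simp [gradSq, hx hwx]
        simp [this]
      · refine tendsto_const_nhds.congr' ?_
        filter_upwards [hε0.eventually_le_const (abs_pos.mpr hwx)] with n hn
        rw [hko n _ hn, one_mul]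
  have hlimw : Tendsto (fun n => ∫ x in Ω, φ n (w x) ^ 2) atTop (𝓝 (∫ x in Ω, w x ^ 2)) := by
    refine tendsto_integral_of_dominated_convergence (fun _ => B ^ 2) (fun n => ?_)
      (hcst _) (fun n => ?_) ?_
    · exact (((hφc n).comp_continuousOn hw1.continuousOn).pow 2).aestronglyMeasurable
        hΩ.measurableSet
    · rw [ae_restrict_iff' hΩ.measurableSet]
      refine Eventually.of_forall fun x hx => ?_
      rw [Real.norm_eq_abs, abs_of_nonneg (sq_nonneg _)]
      exact sq_le_sq.mpr (((hφl n _).trans (hwB x hx)).trans (le_abs_self B))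
    · refine Eventually.of_forall fun x => Tendsto.pow ?_ 2
      rw [tendsto_iff_norm_sub_tendsto_zero]
      exact squeeze_zero (fun n => norm_nonneg _) (fun n => hφa n (w x)) hε0
  have hGle := le_of_tendsto' hlimG fun n => (hmain n).1
  constructor
  · refine le_of_tendsto' hlimw fun n => (hmain n).2.trans ?_
    rw [mul_assoc (4 * R ^ 2) (_ / _)]
    exact mul_le_mul_of_nonneg_left (hmain n).1 (by positivity)
  · intro i
    refine le_trans ?_ hGle
    refine setIntegral_mono_on ?_ ?_ hΩ.measurableSet fun x hx => ?_
    · refine integrableOn_of_cont_bdd hΩ hb ((hpd i).pow 2) (B ^ 2) fun x hx => ?_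
      rw [abs_of_nonneg (sq_nonneg _)]
      exact sq_le_sq.mpr ((hwB' x hx i).trans (le_abs_self B))
    · refine integrableOn_of_cont_bdd hΩ hb hG (d * B ^ 2) fun x hx => ?_
      rw [abs_of_nonneg (hG0 x)]
      exact hGB x hx
    · exact Finset.single_le_sum (f := fun j => (fderiv ℝ w x (EuclideanSpace.single j 1)) ^ 2)
          (fun j _ => sq_nonneg _) (Finset.mem_univ i)

/-! ### Divergence-form operator on powers -/

theorem fderiv_rpow_apply {d : ℕ} {u : EuclideanSpace ℝ (Fin d) → ℝ}
    {x : EuclideanSpace ℝ (Fin d)} (hu : DifferentiableAt ℝ u x) (h0 : 0 < u x) (p : ℝ)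
    (v : EuclideanSpace ℝ (Fin d)) :
    fderiv ℝ (fun y => u y ^ p) x v = p * u x ^ (p - 1) * fderiv ℝ u x v := by
  rw [(hu.hasFDerivAt.rpow_const (p := p) (Or.inl h0.ne')).fderiv]
  simp

/-- Chain rule `∇·(D∇u^p) = p u^{p-1} ∇·(D∇u) + p (p-1) u^{p-2} D |∇u|²`. -/
theorem divA_rpow {d : ℕ} {Ω : Set (EuclideanSpace ℝ (Fin d))} (hΩ : IsOpen Ω)
    {D u : EuclideanSpace ℝ (Fin d) → ℝ} (hD : ContDiffOn ℝ 1 D Ω) (hu : ContDiffOn ℝ 2 u Ω)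
    (hpos : ∀ x ∈ Ω, 0 < u x) (p : ℝ) {x : EuclideanSpace ℝ (Fin d)} (hx : x ∈ Ω) :
    divA D (fun y => u y ^ p) x = p * u x ^ (p - 1) * divA D u x
      + p * (p - 1) * u x ^ (p - 2) * (D x * gradSq u x) := by
  have hu1 : ContDiffOn ℝ 1 u Ω := hu.of_le (by norm_num)
  have hud : ∀ x ∈ Ω, DifferentiableAt ℝ u x := fun x hx =>
    (hu1.contDiffAt (hΩ.mem_nhds hx)).differentiableAt (by norm_num)
  have hDp : ∀ i : Fin d, ContDiffOn ℝ 1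
      (fun y => D y * fderiv ℝ u y (EuclideanSpace.single i 1)) Ω := fun i =>
    hD.mul ((hu.fderiv_of_isOpen hΩ (by norm_num)).clm_apply contDiffOn_const)
  rw [divA, divA, gradSq, Finset.mul_sum, Finset.mul_sum, Finset.mul_sum,
    ← Finset.sum_add_distrib]
  refine Finset.sum_congr rfl fun i _ => ?_
  have heq : (fun y => D y * fderiv ℝ (fun y => u y ^ p) y (EuclideanSpace.single i 1)) =ᶠ[𝓝 x]
      fun y => (p * u y ^ (p - 1)) * (D y * fderiv ℝ u y (EuclideanSpace.single i 1)) := by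
    filter_upwards [hΩ.mem_nhds hx] with y hy
    rw [fderiv_rpow_apply (hud y hy) (hpos y hy)]
    ring
  rw [heq.fderiv_eq]
  have h1 := (((hud x hx).hasFDerivAt.rpow_const (p := p - 1) (Or.inl (hpos x hx).ne')).const_mul
    p).fun_mul
    (((hDp i).contDiffAt (hΩ.mem_nhds hx)).differentiableAt (by norm_num)).hasFDerivAt
  rw [h1.fderiv]
  simp
  rw [show p - 1 - 1 = p - 2 by ring]
  ring

theorem divA_sub {d : ℕ} {Ω : Set (EuclideanSpace ℝ (Fin d))} (hΩ : IsOpen Ω)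
    {D u v : EuclideanSpace ℝ (Fin d) → ℝ} (hD : ContDiffOn ℝ 1 D Ω) (hu : ContDiffOn ℝ 2 u Ω)
    (hv : ContDiffOn ℝ 2 v Ω) {x : EuclideanSpace ℝ (Fin d)} (hx : x ∈ Ω) :
    divA D (fun y => u y - v y) x = divA D u x - divA D v x := by
  have hd : ∀ {u : EuclideanSpace ℝ (Fin d) → ℝ}, ContDiffOn ℝ 2 u Ω → ∀ x ∈ Ω,
      DifferentiableAt ℝ u x := fun hu x hx =>
    (hu.contDiffAt (hΩ.mem_nhds hx)).differentiableAt (by norm_num)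
  have hDp : ∀ {u : EuclideanSpace ℝ (Fin d) → ℝ}, ContDiffOn ℝ 2 u Ω → ∀ i : Fin d,
      DifferentiableAt ℝ (fun y => D y * fderiv ℝ u y (EuclideanSpace.single i 1)) x :=
    fun hu i => ((hD.mul ((hu.fderiv_of_isOpen hΩ (by norm_num)).clm_apply
      contDiffOn_const)).contDiffAt (hΩ.mem_nhds hx)).differentiableAt (by norm_num)
  rw [divA, divA, divA, ← Finset.sum_sub_distrib]
  refine Finset.sum_congr rfl fun i _ => ?_
  have heq : (fun y => D y * fderiv ℝ (fun y => u y - v y) y (EuclideanSpace.single i 1)) =ᶠ[𝓝 x]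
      fun y => D y * fderiv ℝ u y (EuclideanSpace.single i 1)
        - D y * fderiv ℝ v y (EuclideanSpace.single i 1) := by
    filter_upwards [hΩ.mem_nhds hx] with y hy
    rw [fderiv_fun_sub (hd hu y hy) (hd hv y hy)]
    simp
    ring
  rw [heq.fderiv_eq, fderiv_fun_sub (hDp hu i) (hDp hv i)]
  simp

/-! ### Power functions and the reconstruction formula -/

theorem rpow_bounds {a b : ℝ} (ha : 0 < a) (hab : a ≤ b) (q : ℝ) :
    ∃ m L : ℝ, 0 < m ∧ 0 < L ∧ ∀ t ∈ Icc a b, m ≤ t ^ q ∧ t ^ q ≤ L := by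
  have hc : ContinuousOn (fun t : ℝ => t ^ q) (Icc a b) := fun t ht =>
    (Real.continuousAt_rpow_const t q (Or.inl (ha.trans_le ht.1).ne')).continuousWithinAt
  obtain ⟨s, hs, hs'⟩ := isCompact_Icc.exists_isMinOn (nonempty_Icc.mpr hab) hc
  obtain ⟨r, hr, hr'⟩ := isCompact_Icc.exists_isMaxOn (nonempty_Icc.mpr hab) hc
  exact ⟨s ^ q, r ^ q, Real.rpow_pos_of_pos (ha.trans_le hs.1) q,
    Real.rpow_pos_of_pos (ha.trans_le hr.1) q, fun t ht => ⟨hs' ht, hr' ht⟩⟩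

/-- On `[a, b]` the power `t ↦ t ^ p` has a Lipschitz inverse, because its derivative is bounded
away from `0`. -/
theorem sub_le_rpow_sub {a b p : ℝ} (ha : 0 < a) (hab : a ≤ b) (hp : p ≠ 0) :
    ∃ L : ℝ, 0 < L ∧ ∀ s ∈ Icc a b, ∀ t ∈ Icc a b, |s - t| ≤ L * |s ^ p - t ^ p| := by
  obtain ⟨m, _, hm, _, hmL⟩ := rpow_bounds ha hab (p - 1)
  have hpp : 0 < |p| := abs_pos.mpr hp
  have key : ∀ s ∈ Icc a b, ∀ t ∈ Icc a b, s < t → |p| * m * |s - t| ≤ |s ^ p - t ^ p| := by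
    intro s hs t ht hst
    have hd : ∀ r ∈ Icc s t, HasDerivAt (fun r : ℝ => r ^ p) (p * r ^ (p - 1)) r := fun r hr =>
      Real.hasDerivAt_rpow_const (Or.inl (by linarith [hr.1, hs.1] : 0 < r).ne')
    obtain ⟨c, hc, hc'⟩ := exists_hasDerivAt_eq_slope (fun r : ℝ => r ^ p) _ hst
      (fun r hr => (hd r hr).continuousAt.continuousWithinAt)
      (fun r hr => hd r (Ioo_subset_Icc_self hr))
    have hts : 0 < t - s := sub_pos.mpr hst
    rw [eq_div_iff hts.ne'] at hc'
    have hcm := (hmL c ⟨hs.1.trans hc.1.le, hc.2.le.trans ht.2⟩).1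
    rw [abs_sub_comm s t, abs_sub_comm (s ^ p), ← hc', abs_mul, abs_mul,
      abs_of_pos (hm.trans_le hcm)]
    gcongr
  refine ⟨(|p| * m)⁻¹, by positivity, fun s hs t ht => ?_⟩
  rw [inv_mul_eq_div, le_div_iff₀ (by positivity), mul_comm]
  rcases lt_trichotomy s t with h | h | h
  · exact key s hs t ht h
  · simp [h]
  · rw [abs_sub_comm, abs_sub_comm (s ^ p)]
    exact key t ht s hs h

theorem rpow_sub_mul_sign {s t p q : ℝ} (hs : 0 < s) (ht : 0 < t) :
    (0 < p * q → 0 ≤ (s ^ q - t ^ q) * (s ^ p - t ^ p)) ∧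
    (0 < p → q ≤ 0 → (s ^ q - t ^ q) * (s ^ p - t ^ p) ≤ 0) := by
  constructor
  · intro h
    rcases pos_and_pos_or_neg_and_neg_of_mul_pos h with ⟨hp, hq⟩ | ⟨hp, hq⟩
    · rcases le_total s t with hst | hst
      · exact mul_nonneg_of_nonpos_of_nonpos
          (sub_nonpos.mpr (Real.rpow_le_rpow hs.le hst hq.le))
          (sub_nonpos.mpr (Real.rpow_le_rpow hs.le hst hp.le))
      · exact mul_nonneg (sub_nonneg.mpr (Real.rpow_le_rpow ht.le hst hq.le))
          (sub_nonneg.mpr (Real.rpow_le_rpow ht.le hst hp.le))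
    · rcases le_total s t with hst | hst
      · exact mul_nonneg
          (sub_nonneg.mpr (Real.rpow_le_rpow_of_nonpos hs hst hq.le))
          (sub_nonneg.mpr (Real.rpow_le_rpow_of_nonpos hs hst hp.le))
      · exact mul_nonneg_of_nonpos_of_nonpos
          (sub_nonpos.mpr (Real.rpow_le_rpow_of_nonpos ht hst hq.le))
          (sub_nonpos.mpr (Real.rpow_le_rpow_of_nonpos ht hst hp.le))
  · intro hp hq
    rcases le_total s t with hst | hst
    · exact mul_nonpos_of_nonneg_of_nonpos
        (sub_nonneg.mpr (Real.rpow_le_rpow_of_nonpos hs hst hq))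
        (sub_nonpos.mpr (Real.rpow_le_rpow hs.le hst hp.le))
    · exact mul_nonpos_of_nonpos_of_nonneg
        (sub_nonpos.mpr (Real.rpow_le_rpow_of_nonpos ht hst hq))
        (sub_nonneg.mpr (Real.rpow_le_rpow ht.le hst hp.le))

/-- Pointwise Lipschitz stability of the reconstruction formula
`f = (q - γ D |g|²) / (βf s²) - (βx / βf) σ`, where `g` is the gradient at a point where `u = s`,
measured in the variables `s ^ p` and `p s^{p-1} g`, i.e. the value and gradient of `u ^ p`. -/
theorem recon {a b p βf γ βx M Qbar A₁ : ℝ} (ha : 0 < a) (hab : a ≤ b) (hp : p ≠ 0)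
    (hβf : βf ≠ 0) (hM : 0 < M) (hQ : 0 < Qbar) (hA₁ : 0 < A₁) :
    ∃ C : ℝ, 0 < C ∧ ∀ (d : ℕ) (s t q₁ q₂ D σ f₁ f₂ : ℝ) (g h : Fin d → ℝ),
      s ∈ Icc a b → t ∈ Icc a b → (∀ i, |g i| ≤ M) → (∀ i, |h i| ≤ M) → |q₂| ≤ Qbar →
      0 ≤ D → D ≤ A₁ →
      q₁ = γ * D * ∑ i, g i ^ 2 + (βx * σ + βf * f₁) * s ^ 2 →
      q₂ = γ * D * ∑ i, h i ^ 2 + (βx * σ + βf * f₂) * t ^ 2 →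
      |f₁ - f₂| ≤ C * (|q₁ - q₂| + (d + 1) * |s ^ p - t ^ p|
        + ∑ i, |p * s ^ (p - 1) * g i - p * t ^ (p - 1) * h i|) := by
  obtain ⟨L, hL, hLip⟩ := sub_le_rpow_sub ha hab hp
  obtain ⟨m, _, hm, _, hmL⟩ := rpow_bounds ha hab p
  have hpp : 0 < |p| := abs_pos.mpr hp
  have hβ : 0 < |βf| := abs_pos.mpr hβf
  have hb : 0 < b := ha.trans_le hab
  obtain ⟨L₁, hL₁⟩ : ∃ L₁, L₁ = (1 + |p| * (M / a)) / (|p| * m) := ⟨_, rfl⟩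
  have hL₁0 : 0 < L₁ := by rw [hL₁]; positivity
  -- the three coefficients bound the terms in `q₁ - q₂`, `s - t` and `g / s - h / t`
  obtain ⟨E₁, hE₁⟩ : ∃ E₁, E₁ = (a ^ 2)⁻¹ := ⟨_, rfl⟩
  obtain ⟨E₂, hE₂⟩ : ∃ E₂, E₂ = Qbar * (2 * b / a ^ 4 * L) := ⟨_, rfl⟩
  obtain ⟨E₃, hE₃⟩ : ∃ E₃, E₃ = |γ| * A₁ * (2 * (M / a) * L₁) := ⟨_, rfl⟩
  have hE₁0 : 0 < E₁ := by rw [hE₁]; positivity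
  have hE₂0 : 0 < E₂ := by rw [hE₂]; positivity
  have hE₃0 : 0 ≤ E₃ := by rw [hE₃]; positivity
  refine ⟨|βf|⁻¹ * (E₁ + E₂ + E₃), by positivity, ?_⟩
  intro d s t q₁ q₂ D σ f₁ f₂ g h hs ht hg hh hq₂ hD0 hD1 he₁ he₂
  have hs0 : 0 < s := ha.trans_le hs.1
  have ht0 : 0 < t := ha.trans_le ht.1
  obtain ⟨W, hW⟩ : ∃ W, W = |s ^ p - t ^ p| := ⟨_, rfl⟩
  obtain ⟨X, hX⟩ : ∃ X : Fin d → ℝ,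
    X = fun i => |p * s ^ (p - 1) * g i - p * t ^ (p - 1) * h i| := ⟨_, rfl⟩
  have hW0 : 0 ≤ W := by rw [hW]; positivity
  have hX0 : ∀ i, 0 ≤ X i := fun i => by rw [hX]; positivity
  have hr : ∀ i, |g i / s - h i / t| ≤ L₁ * (W + X i) := by
    intro i
    have hid : p * s ^ p * (g i / s - h i / t) =
        (p * s ^ (p - 1) * g i - p * t ^ (p - 1) * h i) - p * (s ^ p - t ^ p) * (h i / t) := by
      rw [Real.rpow_sub_one hs0.ne', Real.rpow_sub_one ht0.ne']
      field_simp
      ring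
    have h1 : |p| * s ^ p * |g i / s - h i / t| ≤ X i + |p| * W * (M / a) := by
      have h2 : |p * s ^ p * (g i / s - h i / t)| = |p| * s ^ p * |g i / s - h i / t| := by
        rw [abs_mul, abs_mul, abs_of_pos (Real.rpow_pos_of_pos hs0 p)]
      rw [← h2, hid]
      refine (abs_sub _ _).trans ?_
      have h3 : |h i / t| ≤ M / a := by
        rw [abs_div, abs_of_pos ht0]
        exact div_le_div₀ hM.le (hh i) ha ht.1
      rw [abs_mul, abs_mul, ← hW]
      have h4 : |p| * W * |h i / t| ≤ |p| * W * (M / a) := by gcongr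
      have h5 : X i = |p * s ^ (p - 1) * g i - p * t ^ (p - 1) * h i| := by rw [hX]
      linarith
    have h6 : |p| * m * |g i / s - h i / t| ≤ |p| * s ^ p * |g i / s - h i / t| := by
      gcongr
      exact (hmL s hs).1
    rw [hL₁, div_mul_eq_mul_div, le_div_iff₀ (by positivity)]
    have h7 : 0 ≤ |p| * (M / a) * X i := mul_nonneg (by positivity) (hX0 i)
    nlinarith
  have hrb : ∀ i, |g i / s + h i / t| ≤ 2 * (M / a) := by
    intro i
    refine (abs_add_le _ _).trans ?_
    rw [abs_div, abs_div, abs_of_pos ht0, abs_of_pos hs0]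
    have h1 := div_le_div₀ hM.le (hg i) ha hs.1
    have h2 := div_le_div₀ hM.le (hh i) ha ht.1
    linarith
  have hG : |∑ i, (g i / s) ^ 2 - ∑ i, (h i / t) ^ 2|
      ≤ 2 * (M / a) * L₁ * (d * W + ∑ i, X i) := by
    rw [← Finset.sum_sub_distrib]
    refine (Finset.abs_sum_le_sum_abs _ _).trans ?_
    have : 2 * (M / a) * L₁ * (d * W + ∑ i, X i) = ∑ i, 2 * (M / a) * (L₁ * (W + X i)) := by
      rw [← Finset.mul_sum, ← Finset.mul_sum, Finset.sum_add_distrib]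
      simp
      ring
    rw [this]
    refine Finset.sum_le_sum fun i _ => ?_
    rw [sq_sub_sq, abs_mul]
    exact mul_le_mul (hrb i) (hr i) (abs_nonneg _) (by positivity)
  have hinv : |(s ^ 2)⁻¹ - (t ^ 2)⁻¹| ≤ 2 * b / a ^ 4 * (L * W) := by
    have h1 : (s ^ 2)⁻¹ - (t ^ 2)⁻¹ = -((s - t) * ((s + t) / (s ^ 2 * t ^ 2))) := by
      field_simp
      ring
    rw [h1, abs_neg, abs_mul, mul_comm, abs_of_pos (by positivity : 0 < (s + t) / (s ^ 2 * t ^ 2))]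
    have h2 : (s + t) / (s ^ 2 * t ^ 2) ≤ 2 * b / a ^ 4 := by
      have h3 : a ^ 4 ≤ s ^ 2 * t ^ 2 := by
        have h4 : a ^ 2 ≤ s ^ 2 := pow_le_pow_left₀ ha.le hs.1 2
        have h5 : a ^ 2 ≤ t ^ 2 := pow_le_pow_left₀ ha.le ht.1 2
        calc a ^ 4 = a ^ 2 * a ^ 2 := by ring
          _ ≤ _ := mul_le_mul h4 h5 (by positivity) (by positivity)
      exact div_le_div₀ (by positivity) (by linarith [hs.2, ht.2]) (by positivity) h3
    have h3 := hLip s hs t ht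
    rw [← hW] at h3
    exact mul_le_mul h2 h3 (abs_nonneg _) (by positivity)
  have hQt : |q₁ * (s ^ 2)⁻¹ - q₂ * (t ^ 2)⁻¹| ≤ E₁ * |q₁ - q₂| + E₂ * W := by
    have h1 : q₁ * (s ^ 2)⁻¹ - q₂ * (t ^ 2)⁻¹ =
        (s ^ 2)⁻¹ * (q₁ - q₂) + q₂ * ((s ^ 2)⁻¹ - (t ^ 2)⁻¹) := by ring
    rw [h1]
    refine (abs_add_le _ _).trans ?_
    rw [abs_mul, abs_mul, abs_of_pos (by positivity : 0 < (s ^ 2)⁻¹)]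
    have h2 : (s ^ 2)⁻¹ ≤ E₁ := by
      rw [hE₁]
      exact inv_anti₀ (by positivity) (pow_le_pow_left₀ ha.le hs.1 2)
    have h3 : |q₂| * |(s ^ 2)⁻¹ - (t ^ 2)⁻¹| ≤ Qbar * (2 * b / a ^ 4 * (L * W)) :=
      mul_le_mul hq₂ hinv (abs_nonneg _) hQ.le
    have h4 : E₂ * W = Qbar * (2 * b / a ^ 4 * (L * W)) := by rw [hE₂]; ring
    have h5 := mul_le_mul_of_nonneg_right h2 (abs_nonneg (q₁ - q₂))
    linarith
  have hf : βf * (f₁ - f₂) = (q₁ * (s ^ 2)⁻¹ - q₂ * (t ^ 2)⁻¹)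
      - γ * D * (∑ i, (g i / s) ^ 2 - ∑ i, (h i / t) ^ 2) := by
    have h1 : ∑ i, (g i / s) ^ 2 = (∑ i, g i ^ 2) * (s ^ 2)⁻¹ := by
      rw [Finset.sum_mul]; exact Finset.sum_congr rfl fun i _ => by rw [div_pow]; rfl
    have h2 : ∑ i, (h i / t) ^ 2 = (∑ i, h i ^ 2) * (t ^ 2)⁻¹ := by
      rw [Finset.sum_mul]; exact Finset.sum_congr rfl fun i _ => by rw [div_pow]; rfl
    rw [h1, h2, he₁, he₂]
    field_simp
    ring
  have hγ : |γ * D * (∑ i, (g i / s) ^ 2 - ∑ i, (h i / t) ^ 2)| ≤ E₃ * (d * W + ∑ i, X i) := by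
    rw [abs_mul, abs_mul, abs_of_nonneg hD0, hE₃, mul_assoc (|γ| * A₁)]
    exact mul_le_mul (mul_le_mul_of_nonneg_left hD1 (abs_nonneg _)) hG (abs_nonneg _)
      (by positivity)
  have hfin : |βf| * |f₁ - f₂| ≤ (E₁ + E₂ + E₃) * (|q₁ - q₂| + (d + 1) * W + ∑ i, X i) := by
    rw [← abs_mul, hf]
    refine (abs_sub _ _).trans ?_
    have hS : 0 ≤ ∑ i, X i := Finset.sum_nonneg fun i _ => hX0 i
    have hdW : (0 : ℝ) ≤ d * W := by positivity
    have h1 : E₁ * |q₁ - q₂| ≤ E₁ * (|q₁ - q₂| + (d + 1) * W + ∑ i, X i) :=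
      mul_le_mul_of_nonneg_left (by linarith) hE₁0.le
    have h2 : E₂ * W ≤ E₂ * (|q₁ - q₂| + (d + 1) * W + ∑ i, X i) :=
      mul_le_mul_of_nonneg_left (by linarith [abs_nonneg (q₁ - q₂)]) hE₂0.le
    have h3 : E₃ * (d * W + ∑ i, X i) ≤ E₃ * (|q₁ - q₂| + (d + 1) * W + ∑ i, X i) :=
      mul_le_mul_of_nonneg_left (by linarith [abs_nonneg (q₁ - q₂)]) hE₃0
    linarith
  rw [← hW, mul_assoc, inv_mul_eq_div, le_div_iff₀ hβ, mul_comm]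
  rw [hX] at hfin
  exact hfin

/-! ### The equation for `Ψ` -/

/-- The change of variables: if `∇·(D∇u) = (σ + f) u` and `p - 1 = γ / βf`, then `Ψ = u ^ p`
satisfies `∇·(D∇Ψ) = bΨ + c u^{p-2}` with `b = -p σ (βx / βf - 1)`, `c = (p / βf) q`. The last
term equals `c Ψ^{-θ}` for `θ = 2 / p - 1`. -/
theorem divA_rpow_of_pde {d : ℕ} {Ω : Set (EuclideanSpace ℝ (Fin d))} (hΩ : IsOpen Ω)
    {D u σ f q : EuclideanSpace ℝ (Fin d) → ℝ} (hD : ContDiffOn ℝ 1 D Ω)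
    (hu : ContDiffOn ℝ 2 u Ω) (hpos : ∀ x ∈ Ω, 0 < u x) {p γ βx βf : ℝ} (hβf : βf ≠ 0)
    (hp : p - 1 = γ / βf) {x : EuclideanSpace ℝ (Fin d)} (hx : x ∈ Ω)
    (hpde : -divA D u x + (σ x + f x) * u x = 0)
    (hq : q x = γ * D x * gradSq u x + (βx * σ x + βf * f x) * (u x) ^ 2) :
    divA D (fun y => u y ^ p) x =
      -p * σ x * (βx / βf - 1) * u x ^ p + p / βf * q x * u x ^ (p - 2) := by
  have h0 := hpos x hx
  rw [divA_rpow hΩ hD hu hpos p hx, hp, show divA D u x = (σ x + f x) * u x by linarith, hq]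
  have h1 : u x ^ (γ / βf) = u x ^ (p - 2) * u x := by
    rw [← hp, show p - 1 = (p - 2) + 1 by ring, Real.rpow_add_one h0.ne']
  have h2 : u x ^ p = u x ^ (p - 2) * u x ^ 2 := by
    rw [← Real.rpow_natCast (u x) 2, ← Real.rpow_add h0]
    norm_num
  rw [h1, h2]
  field_simp
  ring

/-- The zeroth-order terms of the equation for `Ψ₁ - Ψ₂`, with `Ψ₁ = s ^ p`, `Ψ₂ = t ^ p`, are
monotone up to the error `(c₁ - c₂) t^{p-2}`. -/
theorem reaction_lower_bound {s t p θ b c₁ c₂ L : ℝ} (hs : 0 < s) (ht : 0 < t) (hp : p ≠ 0)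
    (hθ : θ = 2 / p - 1) (hb : 0 ≤ b) (hL : t ^ (p - 2) ≤ L)
    (hc : (θ < 0 ∧ 0 ≤ c₁) ∨ (0 ≤ θ ∧ c₁ ≤ 0)) :
    -(L * |c₁ - c₂| * |s ^ p - t ^ p|) ≤
      ((b * s ^ p + c₁ * s ^ (p - 2)) - (b * t ^ p + c₂ * t ^ (p - 2))) * (s ^ p - t ^ p) := by
  have hmono : 0 ≤ c₁ * ((s ^ (p - 2) - t ^ (p - 2)) * (s ^ p - t ^ p)) := by
    obtain ⟨h1, h2⟩ := rpow_sub_mul_sign (p := p) (q := p - 2) hs ht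
    have hpθ : p * (p - 2) = -θ * p ^ 2 := by rw [hθ]; field_simp; ring
    have hp2 : 0 < p ^ 2 := by positivity
    rcases hc with ⟨hθ0, hc⟩ | ⟨hθ0, hc⟩
    · exact mul_nonneg hc (h1 (by rw [hpθ]; exact mul_pos (by linarith) hp2))
    · have h3 : 1 ≤ 2 / p := by linarith
      have hp0 : 0 < p := by
        by_contra hneg
        have := div_nonpos_of_nonneg_of_nonpos (by norm_num : (0 : ℝ) ≤ 2) (not_lt.mp hneg)
        linarith
      rw [one_le_div hp0] at h3
      exact mul_nonneg_of_nonpos_of_nonpos hc (h2 hp0 (by linarith))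
  have herr : -(L * |c₁ - c₂| * |s ^ p - t ^ p|) ≤
      (c₁ - c₂) * t ^ (p - 2) * (s ^ p - t ^ p) := by
    have h1 := neg_abs_le ((c₁ - c₂) * t ^ (p - 2) * (s ^ p - t ^ p))
    rw [abs_mul, abs_mul, abs_of_pos (Real.rpow_pos_of_pos ht _)] at h1
    have h2 : |c₁ - c₂| * t ^ (p - 2) * |s ^ p - t ^ p| ≤ L * |c₁ - c₂| * |s ^ p - t ^ p| := by
      rw [mul_comm L]
      gcongr
    linarith
  nlinarith [mul_nonneg hb (mul_self_nonneg (s ^ p - t ^ p))]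

/-! ### Stability of the reconstruction -/

set_option maxHeartbeats 1000000 in
theorem stmt14 {d : ℕ} (hd : 1 ≤ d) (Ω U : Set (EuclideanSpace ℝ (Fin d)))
    (hΩo : IsOpen Ω) (hΩb : Bornology.IsBounded Ω)
    (hU : IsOpen U) (hUΩ : closure Ω ⊆ U)
    (Dx σxa : EuclideanSpace ℝ (Fin d) → ℝ)
    (hDx : ContDiffOn ℝ 1 Dx U)
    (a₀ A₁ A₂ Sbar : ℝ) (ha₀ : 0 < a₀) (haA : a₀ ≤ A₁) (hA₂ : 0 ≤ A₂)
    (hDlb : ∀ x ∈ closure Ω, a₀ ≤ Dx x) (hDub : ∀ x ∈ closure Ω, Dx x ≤ A₁)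
    (hDgrad : ∀ x ∈ closure Ω, ‖fderiv ℝ Dx x‖ ≤ A₂)
    (hσcont : ContinuousOn σxa (closure Ω))
    (hσlb : ∀ x ∈ closure Ω, 0 ≤ σxa x) (hσub : ∀ x ∈ closure Ω, σxa x ≤ Sbar)
    (γx βx βf : ℝ) (hβf : βf ≠ 0) (hsum : βf + γx ≠ 0)
    (θ μ : ℝ) (hθ : θ = (βf - γx) / (βf + γx)) (hμ : μ = βx / βf - 1)
    (hbnn : ∀ x ∈ Ω, 0 ≤ -(2 / (1 + θ)) * σxa x * μ)
    (K₉ K₁₀ M Qbar : ℝ) (hK₁₀ : 0 < K₁₀) (hK : K₁₀ < K₉) (hM : 0 < M)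
    (hQbar : 0 < Qbar) :
    ∃ K₁₄ : ℝ, 0 < K₁₄ ∧
      ∀ σf₁ σf₂ u₁ u₂ Q₁ Q₂ c₁ c₂ : EuclideanSpace ℝ (Fin d) → ℝ,
        ContinuousOn σf₁ (closure Ω) → ContinuousOn σf₂ (closure Ω) →
        ContDiffOn ℝ 2 u₁ Ω → ContDiffOn ℝ 1 u₁ (closure Ω) →
        ContDiffOn ℝ 2 u₂ Ω → ContDiffOn ℝ 1 u₂ (closure Ω) →
        (∀ x ∈ Ω, -divA Dx u₁ x + (σxa x + σf₁ x) * u₁ x = 0) →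
        (∀ x ∈ Ω, -divA Dx u₂ x + (σxa x + σf₂ x) * u₂ x = 0) →
        (∀ x ∈ frontier Ω, u₁ x = u₂ x) →
        (∀ x ∈ closure Ω, K₁₀ ≤ u₁ x ∧ u₁ x ≤ K₉ ∧ ‖fderiv ℝ u₁ x‖ ≤ M) →
        (∀ x ∈ closure Ω, K₁₀ ≤ u₂ x ∧ u₂ x ≤ K₉ ∧ ‖fderiv ℝ u₂ x‖ ≤ M) →
        (∀ x, Q₁ x = γx * Dx x * gradSq u₁ x
            + (βx * σxa x + βf * σf₁ x) * (u₁ x) ^ 2) →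
        (∀ x, Q₂ x = γx * Dx x * gradSq u₂ x
            + (βx * σxa x + βf * σf₂ x) * (u₂ x) ^ 2) →
        (∀ x, c₁ x = (2 / ((1 + θ) * βf)) * Q₁ x) →
        (∀ x, c₂ x = (2 / ((1 + θ) * βf)) * Q₂ x) →
        (∀ x ∈ closure Ω, |Q₁ x| ≤ Qbar) → (∀ x ∈ closure Ω, |Q₂ x| ≤ Qbar) →
        ((θ < 0 ∧ θ ≠ -1 ∧ (∀ x ∈ Ω, 0 ≤ c₁ x) ∧ (∀ x ∈ Ω, 0 ≤ c₂ x)) ∨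
          (0 ≤ θ ∧ (∀ x ∈ Ω, c₁ x ≤ 0) ∧ (∀ x ∈ Ω, c₂ x ≤ 0))) →
        normL1 Ω (fun x => σf₁ x - σf₂ x)
          ≤ K₁₄ * (normL1 Ω (fun x => Q₁ x - Q₂ x)
              + normL2 Ω (fun x => Q₁ x - Q₂ x)
              + (normL2 Ω (fun x => Q₁ x - Q₂ x)) ^ 2) := by
  -- `Ψ = u ^ p` with `p = 2 / (1 + θ) = (βf + γx) / βf`
  obtain ⟨p, hpdef⟩ : ∃ p, p = 2 / (1 + θ) := ⟨_, rfl⟩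
  have hpv : p = (βf + γx) / βf := by
    have h1 : 1 + θ = 2 * βf / (βf + γx) := by rw [hθ]; field_simp; ring
    rw [hpdef, h1]; field_simp
  have hp0 : p ≠ 0 := by rw [hpv]; exact div_ne_zero hsum hβf
  have hp1 : p - 1 = γx / βf := by rw [hpv]; field_simp; ring
  have hθp : θ = 2 / p - 1 := by rw [hpv, hθ]; field_simp; ring
  have hcc : 2 / ((1 + θ) * βf) = p / βf := by rw [hpdef, div_div]
  have hA₁ : 0 < A₁ := ha₀.trans_le haA
  obtain ⟨R, hR, hRΩ⟩ : ∃ R > 0, ∀ x ∈ Ω, |x ⟨0, hd⟩| ≤ R := by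
    obtain ⟨R, hR, hR'⟩ := hΩb.exists_pos_norm_le
    exact ⟨R, hR, fun x hx => (PiLp.norm_apply_le x _).trans (hR' x hx)⟩
  obtain ⟨_, Lp, _, hLp, hLpb⟩ := rpow_bounds hK₁₀ hK.le p
  obtain ⟨_, Lq, _, hLq, hLqb⟩ := rpow_bounds hK₁₀ hK.le (p - 1)
  obtain ⟨_, Lr, _, hLr, hLrb⟩ := rpow_bounds hK₁₀ hK.le (p - 2)
  obtain ⟨C, hC, hrec⟩ := recon (βx := βx) (γ := γx) hK₁₀ hK.le hp0 hβf hM hQbar hA₁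
  obtain ⟨C₀, hC₀⟩ : ∃ C₀, C₀ = Lr * |p / βf| := ⟨_, rfl⟩
  obtain ⟨C₂, hC₂⟩ : ∃ C₂, C₂ = 4 * R ^ 2 * C₀ ^ 2 / a₀ ^ 2 := ⟨_, rfl⟩
  have hC₂0 : 0 ≤ C₂ := by rw [hC₂]; positivity
  obtain ⟨V, hV⟩ : ∃ V, V = volume.real Ω := ⟨_, rfl⟩
  have hV0 : 0 ≤ V := by rw [hV]; exact measureReal_nonneg
  refine ⟨C * (1 + (d + 1) * (V + 4 * R ^ 2 * C₂) + d * (V + C₂)), by positivity, ?_⟩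
  intro σf₁ σf₂ u₁ u₂ Q₁ Q₂ c₁ c₂ hσ₁ hσ₂ hu₁ hu₁' hu₂ hu₂' hpde₁ hpde₂ hbd hb₁ hb₂ hQ₁ hQ₂
    hc₁ hc₂ hQb₁ hQb₂ hsign
  have hcl : ∀ {x}, x ∈ Ω → x ∈ closure Ω := fun hx => subset_closure hx
  have hDΩ : ContDiffOn ℝ 1 Dx Ω := hDx.mono (subset_closure.trans hUΩ)
  have hI₁ : ∀ x ∈ closure Ω, u₁ x ∈ Icc K₁₀ K₉ := fun x hx => ⟨(hb₁ x hx).1, (hb₁ x hx).2.1⟩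
  have hI₂ : ∀ x ∈ closure Ω, u₂ x ∈ Icc K₁₀ K₉ := fun x hx => ⟨(hb₂ x hx).1, (hb₂ x hx).2.1⟩
  have hp₁ : ∀ x ∈ closure Ω, 0 < u₁ x := fun x hx => hK₁₀.trans_le (hI₁ x hx).1
  have hp₂ : ∀ x ∈ closure Ω, 0 < u₂ x := fun x hx => hK₁₀.trans_le (hI₂ x hx).1
  have hd₁ : ∀ x ∈ Ω, DifferentiableAt ℝ u₁ x := fun x hx =>
    (hu₁.contDiffAt (hΩo.mem_nhds hx)).differentiableAt (by norm_num)
  have hd₂ : ∀ x ∈ Ω, DifferentiableAt ℝ u₂ x := fun x hx =>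
    (hu₂.contDiffAt (hΩo.mem_nhds hx)).differentiableAt (by norm_num)
  have hg : ∀ (u : EuclideanSpace ℝ (Fin d) → ℝ) (x : EuclideanSpace ℝ (Fin d)),
      ‖fderiv ℝ u x‖ ≤ M → ∀ i, |fderiv ℝ u x (EuclideanSpace.single i 1)| ≤ M := by
    intro u x h i
    have h1 := (fderiv ℝ u x).le_opNorm (EuclideanSpace.single i 1)
    rw [EuclideanSpace.norm_single, norm_one, mul_one] at h1
    exact h1.trans h
  have hΨ₁ : ContDiffOn ℝ 2 (fun y => u₁ y ^ p) Ω :=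
    hu₁.rpow_const_of_ne fun x hx => (hp₁ x (hcl hx)).ne'
  have hΨ₂ : ContDiffOn ℝ 2 (fun y => u₂ y ^ p) Ω :=
    hu₂.rpow_const_of_ne fun x hx => (hp₂ x (hcl hx)).ne'
  obtain ⟨w, hw⟩ : ∃ w : EuclideanSpace ℝ (Fin d) → ℝ, w = fun y => u₁ y ^ p - u₂ y ^ p :=
    ⟨_, rfl⟩
  have hw2 : ContDiffOn ℝ 2 w Ω := by rw [hw]; exact hΨ₁.sub hΨ₂
  have hw1 : ContDiffOn ℝ 1 w Ω := hw2.of_le (by norm_num)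
  have hwc : ContinuousOn w (closure Ω) := by
    rw [hw]
    exact (hu₁'.continuousOn.rpow_const fun x hx => Or.inl (hp₁ x hx).ne').sub
      (hu₂'.continuousOn.rpow_const fun x hx => Or.inl (hp₂ x hx).ne')
  have hw0 : ∀ x ∈ frontier Ω, w x = 0 := fun x hx => by simp [hw, hbd x hx]
  have hw' : ∀ x ∈ Ω, ∀ i, fderiv ℝ w x (EuclideanSpace.single i 1) =
      p * u₁ x ^ (p - 1) * fderiv ℝ u₁ x (EuclideanSpace.single i 1)
        - p * u₂ x ^ (p - 1) * fderiv ℝ u₂ x (EuclideanSpace.single i 1) := by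
    intro x hx i
    rw [← fderiv_rpow_apply (hd₁ x hx) (hp₁ x (hcl hx)),
      ← fderiv_rpow_apply (hd₂ x hx) (hp₂ x (hcl hx)), hw,
      fderiv_fun_sub ((hΨ₁.contDiffAt (hΩo.mem_nhds hx)).differentiableAt (by norm_num))
        ((hΨ₂.contDiffAt (hΩo.mem_nhds hx)).differentiableAt (by norm_num))]
    rfl
  have hpd : ∀ i : Fin d, ContinuousOn
      (fun x => fderiv ℝ w x (EuclideanSpace.single i 1)) Ω := fun i =>
    (hw1.continuousOn_fderiv_of_isOpen hΩo (by norm_num)).clm_apply continuousOn_const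
  obtain ⟨B, hB⟩ : ∃ B, B = 2 * Lp + 2 * (|p| * Lq * M) := ⟨_, rfl⟩
  have hwB : ∀ x ∈ Ω, |w x| ≤ B := by
    intro x hx
    have h1 := hLpb _ (hI₁ x (hcl hx))
    have h2 := hLpb _ (hI₂ x (hcl hx))
    have h3 := Real.rpow_pos_of_pos (hp₁ x (hcl hx)) p
    have h4 := Real.rpow_pos_of_pos (hp₂ x (hcl hx)) p
    have h5 : 0 ≤ |p| * Lq * M := by positivity
    rw [hw, hB, abs_le]
    constructor <;> linarith
  have hwB' : ∀ x ∈ Ω, ∀ i, |fderiv ℝ w x (EuclideanSpace.single i 1)| ≤ B := by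
    intro x hx i
    rw [hw' x hx i]
    refine (abs_sub _ _).trans ?_
    rw [abs_mul, abs_mul, abs_mul, abs_mul,
      abs_of_pos (Real.rpow_pos_of_pos (hp₁ x (hcl hx)) (p - 1)),
      abs_of_pos (Real.rpow_pos_of_pos (hp₂ x (hcl hx)) (p - 1))]
    have h1 : |p| * u₁ x ^ (p - 1) * |fderiv ℝ u₁ x (EuclideanSpace.single i 1)| ≤ |p| * Lq * M :=
      mul_le_mul (mul_le_mul_of_nonneg_left (hLqb _ (hI₁ x (hcl hx))).2 (abs_nonneg _))
        (hg _ _ (hb₁ x (hcl hx)).2.2 i) (abs_nonneg _) (by positivity)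
    have h2 : |p| * u₂ x ^ (p - 1) * |fderiv ℝ u₂ x (EuclideanSpace.single i 1)| ≤ |p| * Lq * M :=
      mul_le_mul (mul_le_mul_of_nonneg_left (hLqb _ (hI₂ x (hcl hx))).2 (abs_nonneg _))
        (hg _ _ (hb₂ x (hcl hx)).2.2 i) (abs_nonneg _) (by positivity)
    linarith
  have hQcont : ∀ {u σf Q : EuclideanSpace ℝ (Fin d) → ℝ}, ContDiffOn ℝ 2 u Ω →
      ContinuousOn σf (closure Ω) → (∀ x, Q x = γx * Dx x * gradSq u x
        + (βx * σxa x + βf * σf x) * (u x) ^ 2) → ContinuousOn Q Ω := by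
    intro u σf Q hu hσ hQ
    have hG : ContinuousOn (gradSq u) Ω := by
      unfold gradSq
      exact continuousOn_finsetSum _ fun i _ =>
        ((hu.continuousOn_fderiv_of_isOpen hΩo (by norm_num)).clm_apply continuousOn_const).pow 2
    rw [show Q = _ from funext hQ]
    exact ((continuousOn_const.mul hDΩ.continuousOn).mul hG).add
      (((continuousOn_const.mul (hσcont.mono subset_closure)).add
        (continuousOn_const.mul (hσ.mono subset_closure))).mul (hu.continuousOn.pow 2))
  obtain ⟨q, hq⟩ : ∃ q : EuclideanSpace ℝ (Fin d) → ℝ, q = fun x => Q₁ x - Q₂ x := ⟨_, rfl⟩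
  have hqc : ContinuousOn q Ω := by
    rw [hq]
    exact (hQcont hu₁ hσ₁ hQ₁).sub (hQcont hu₂ hσ₂ hQ₂)
  have hqB : ∀ x ∈ Ω, |q x| ≤ 2 * Qbar := fun x hx => by
    rw [hq]
    refine (abs_sub _ _).trans ?_
    linarith [hQb₁ x (hcl hx), hQb₂ x (hcl hx)]
  have hqi : IntegrableOn q Ω := integrableOn_of_cont_bdd hΩo hΩb hqc _ hqB
  have hq2i : IntegrableOn (fun x => q x ^ 2) Ω := by
    refine integrableOn_of_cont_bdd hΩo hΩb (hqc.pow 2) ((2 * Qbar) ^ 2) fun x hx => ?_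
    rw [abs_of_nonneg (sq_nonneg _)]
    exact sq_le_sq.mpr ((hqB x hx).trans (le_abs_self _))
  have hdiv : ∀ x ∈ Ω, -(C₀ * |q x| * |w x|) ≤ divA Dx w x * w x := by
    intro x hx
    have h1 := divA_rpow_of_pde hΩo hDΩ hu₁ (fun x hx => hp₁ x (hcl hx)) hβf hp1 hx
      (hpde₁ x hx) (hQ₁ x)
    have h2 := divA_rpow_of_pde hΩo hDΩ hu₂ (fun x hx => hp₂ x (hcl hx)) hβf hp1 hx
      (hpde₂ x hx) (hQ₂ x)
    have hb := hbnn x hx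
    rw [← hpdef, hμ] at hb
    have h3 := reaction_lower_bound (c₁ := c₁ x) (c₂ := c₂ x) (hp₁ x (hcl hx)) (hp₂ x (hcl hx))
      hp0 hθp hb (hLrb _ (hI₂ x (hcl hx))).2 (by
        rcases hsign with ⟨h, _, h', _⟩ | ⟨h, h', _⟩
        · exact Or.inl ⟨h, h' x hx⟩
        · exact Or.inr ⟨h, h' x hx⟩)
    have h4 : Lr * |c₁ x - c₂ x| = C₀ * |q x| := by
      rw [hc₁, hc₂, hcc, ← mul_sub, abs_mul, hC₀, hq, mul_assoc]
    rw [h4, hc₁, hc₂, hcc, ← h1, ← h2] at h3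
    rw [hw, divA_sub hΩo hDΩ hΨ₁ hΨ₂ hx]
    exact h3
  obtain ⟨hE1, hE2⟩ := energy_bound hd hΩo hΩb hR hRΩ ha₀ hDΩ (fun x hx => hDlb x (hcl hx)) hw2
    hwc hw0 hwB hwB' hq2i hdiv
  rw [← hC₂] at hE1 hE2
  obtain ⟨N, hN⟩ : ∃ N, N = normL2 Ω q := ⟨_, rfl⟩
  have hN0 : 0 ≤ N := by rw [hN]; exact Real.sqrt_nonneg _
  have hN2 : ∫ x in Ω, q x ^ 2 = N ^ 2 := by
    rw [hN, normL2, Real.sq_sqrt (integral_nonneg fun x => sq_nonneg _)]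
  rw [hN2] at hE1
  have hwi : IntegrableOn w Ω := integrableOn_of_cont_bdd hΩo hΩb hw1.continuousOn B hwB
  have hsq : ∀ {r : ℝ}, |r| ≤ B → |r ^ 2| ≤ B ^ 2 := fun h => by
    rw [abs_of_nonneg (sq_nonneg _)]
    exact sq_le_sq.mpr (h.trans (le_abs_self _))
  have hwL1 : ∫ x in Ω, |w x| ≤ (V + 4 * R ^ 2 * C₂) * N := by
    rw [hV]
    exact integral_abs_le_of_sq hΩb hwi (integrableOn_of_cont_bdd hΩo hΩb
      (hw1.continuousOn.pow 2) (B ^ 2) fun x hx => hsq (hwB x hx)) (by positivity) hN0 hE1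
  have hwi' : ∀ i, IntegrableOn (fun x => fderiv ℝ w x (EuclideanSpace.single i 1)) Ω := fun i =>
    integrableOn_of_cont_bdd hΩo hΩb (hpd i) B fun x hx => hwB' x hx i
  have hwL1' : ∀ i, ∫ x in Ω, |fderiv ℝ w x (EuclideanSpace.single i 1)| ≤ (V + C₂) * N := by
    intro i
    have h1 := hE2 i
    rw [hN2] at h1
    rw [hV]
    exact integral_abs_le_of_sq hΩb (hwi' i) (integrableOn_of_cont_bdd hΩo hΩb
      ((hpd i).pow 2) (B ^ 2) fun x hx => hsq (hwB' x hx i)) hC₂0 hN0 h1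
  have hpt : ∀ x ∈ Ω, |σf₁ x - σf₂ x| ≤ C * (|q x| + (d + 1) * |w x|
      + ∑ i, |fderiv ℝ w x (EuclideanSpace.single i 1)|) := by
    intro x hx
    have h1 := hrec d (u₁ x) (u₂ x) (Q₁ x) (Q₂ x) (Dx x) (σxa x) (σf₁ x) (σf₂ x)
      (fun i => fderiv ℝ u₁ x (EuclideanSpace.single i 1))
      (fun i => fderiv ℝ u₂ x (EuclideanSpace.single i 1))
      (hI₁ x (hcl hx)) (hI₂ x (hcl hx)) (hg _ _ (hb₁ x (hcl hx)).2.2)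
      (hg _ _ (hb₂ x (hcl hx)).2.2) (hQb₂ x (hcl hx))
      (ha₀.le.trans (hDlb x (hcl hx))) (hDub x (hcl hx)) (hQ₁ x) (hQ₂ x)
    simp only [← hw' x hx] at h1
    rw [show q x = Q₁ x - Q₂ x by rw [hq], show w x = u₁ x ^ p - u₂ x ^ p by rw [hw]]
    exact h1
  have hsi : IntegrableOn
      (fun x => ∑ i, |fderiv ℝ w x (EuclideanSpace.single i 1)|) Ω :=
    integrable_finsetSum _ fun i _ => (hwi' i).abs
  have hqwi : IntegrableOn (fun x => |q x| + (d + 1) * |w x|) Ω :=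
    hqi.abs.add (hwi.abs.const_mul _)
  have hfin : ∫ x in Ω, |σf₁ x - σf₂ x| ≤ ∫ x in Ω, C * (|q x| + (d + 1) * |w x|
      + ∑ i, |fderiv ℝ w x (EuclideanSpace.single i 1)|) := by
    refine integral_mono_of_nonneg (Eventually.of_forall fun x => abs_nonneg _)
      ((hqwi.add hsi).const_mul C) ?_
    exact (ae_restrict_iff' hΩo.measurableSet).mpr (Eventually.of_forall hpt)
  rw [integral_const_mul, integral_add hqwi hsi, integral_add hqi.abs (hwi.abs.const_mul _),
    integral_const_mul, integral_finsetSum _ fun i _ => (hwi' i).abs] at hfin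
  have hsum1 : ∑ i : Fin d, ∫ x in Ω, |fderiv ℝ w x (EuclideanSpace.single i 1)|
      ≤ d * ((V + C₂) * N) := by
    have := Finset.sum_le_sum fun (i : Fin d) (_ : i ∈ Finset.univ) => hwL1' i
    simpa using this
  rw [← hq, ← hN]
  unfold normL1
  obtain ⟨q₁, hq₁⟩ : ∃ q₁, q₁ = ∫ x in Ω, |q x| := ⟨_, rfl⟩
  have hq₁0 : 0 ≤ q₁ := by rw [hq₁]; exact integral_nonneg fun x => abs_nonneg _
  rw [← hq₁] at hfin ⊢
  refine hfin.trans ?_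
  rw [mul_assoc]
  refine mul_le_mul_of_nonneg_left ?_ hC.le
  obtain ⟨Z, hZ⟩ : ∃ Z, Z = (d + 1) * (V + 4 * R ^ 2 * C₂) + d * (V + C₂) := ⟨_, rfl⟩
  have hZ0 : 0 ≤ Z := by rw [hZ]; positivity
  have h1 : (d + 1 : ℝ) * ∫ x in Ω, |w x| ≤ (d + 1) * ((V + 4 * R ^ 2 * C₂) * N) :=
    mul_le_mul_of_nonneg_left hwL1 (by positivity)
  have h2 : (1 + (d + 1) * (V + 4 * R ^ 2 * C₂) + d * (V + C₂)) = 1 + Z := by rw [hZ]; ring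
  have h3 : (d + 1) * ((V + 4 * R ^ 2 * C₂) * N) + d * ((V + C₂) * N) = Z * N := by rw [hZ]; ring
  rw [h2]
  nlinarith [mul_nonneg hZ0 hq₁0, mul_nonneg hZ0 (sq_nonneg N), sq_nonneg N]
end

section
/- Assume -1 < θ < 0, and b ≥ 0, c ≥ 0 on Ω. Let h be a boundary datum and let Ψ ∈ C²(Ω) ∩ C¹(cl(Ω)) with Ψ > 0 be a classical solution of ∇·(a∇Ψ) = bΨ + cΨ^{-θ} in Ω with Ψ = h on ∂Ω. Let Ψ₀ ∈ C²(Ω) ∩ C¹(cl(Ω)) with Ψ₀ > 0 satisfy -∇·(a∇Ψ₀) + bΨ₀ = 0 in Ω with Ψ₀ = h on ∂Ω, and for each n ≥ 1 let Ψ_n ∈ C²(Ω) ∩ C¹(cl(Ω)) with Ψ_n > 0 satisfy -∇·(a∇Ψ_n) + bΨ_n + cΨ_{n-1}^{-(1+θ)}Ψ_n = 0 in Ω with Ψ_n = h on ∂Ω. Then for every n ≥ 0 one has Ψ ≤ Ψ_{n+1} ≤ Ψ_n in Ω; consequently, for every x ∈ Ω the sequence (Ψ_n(x)) is nonincreasing,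 bounded below by Ψ(x), and convergent. -/
/-!
The statement rests on a weak maximum principle: if `v` is `C²` in `Ω`, continuous on `closure Ω`,
nonpositive on `frontier Ω`, and `∇·(a∇v) ≥ 0` wherever `v > 0`, then `v ≤ 0` in `Ω`
(`weak_max_sub`, with `v = u₁ - u₂`).  It follows by adding a small multiple of the barrier
`exp (lam * x₁)`, which is a strict subsolution for large `lam` because `a ≥ a₀ > 0` and `∂₁a` is
bounded: a positive value of `v` would then give an interior maximum of a function `w` with
`∇·(a∇w) > 0`, which `divA_nonpos_of_isMax` excludes.

With `p = 1 + θ > 0`, the map `s ↦ s ^ (-p)` is decreasing on positive reals, so `Ψ ≤ Ψₙ` makes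
`Ψ - Ψₙ₊₁` satisfy the maximum principle, and `Ψₙ₊₁ ≤ Ψₙ` does the same for `Ψₙ₊₂ - Ψₙ₊₁`.
Induction gives both orderings; the pointwise limit exists by monotone convergence.
-/

open Real Set MeasureTheory Filter Topology

section Helpers

variable {d : ℕ}

lemma differentiableAt_flux {Ω U : Set (EuclideanSpace ℝ (Fin d))} (hΩo : IsOpen Ω)
    (hU : IsOpen U) (hUΩ : Ω ⊆ U) {a u : EuclideanSpace ℝ (Fin d) → ℝ}
    (ha : ContDiffOn ℝ 1 a U) (hu : ContDiffOn ℝ 2 u Ω) {x : EuclideanSpace ℝ (Fin d)}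
    (hx : x ∈ Ω) (e : EuclideanSpace ℝ (Fin d)) :
    DifferentiableAt ℝ (fun y => a y * fderiv ℝ u y e) x := by
  have h1 : DifferentiableAt ℝ a x :=
    (ha.contDiffAt (hU.mem_nhds (hUΩ hx))).differentiableAt (by norm_num)
  have h2 : ContDiffAt ℝ 1 (fderiv ℝ u) x :=
    (hu.contDiffAt (hΩo.mem_nhds hx)).fderiv_right (by norm_num)
  have h3 : DifferentiableAt ℝ (fderiv ℝ u) x := h2.differentiableAt (by norm_num)
  exact h1.mul (h3.clm_apply (differentiableAt_const e))

lemma divA_add_mul {Ω U : Set (EuclideanSpace ℝ (Fin d))} (hΩo : IsOpen Ω)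
    (hU : IsOpen U) (hUΩ : Ω ⊆ U) {a u v : EuclideanSpace ℝ (Fin d) → ℝ}
    (ha : ContDiffOn ℝ 1 a U) (hu : ContDiffOn ℝ 2 u Ω) (hv : ContDiffOn ℝ 2 v Ω)
    (k : ℝ) {x : EuclideanSpace ℝ (Fin d)} (hx : x ∈ Ω) :
    divA a (fun y => u y + k * v y) x = divA a u x + k * divA a v x := by
  unfold divA
  rw [Finset.mul_sum, ← Finset.sum_add_distrib]
  refine Finset.sum_congr rfl fun i _ => ?_
  set e : EuclideanSpace ℝ (Fin d) := EuclideanSpace.single i (1 : ℝ)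
  have hev : (fun y => a y * fderiv ℝ (fun y => u y + k * v y) y e) =ᶠ[𝓝 x]
      fun y => a y * fderiv ℝ u y e + k * (a y * fderiv ℝ v y e) := by
    filter_upwards [hΩo.mem_nhds hx] with y hy
    have hu' : DifferentiableAt ℝ u y :=
      (hu.contDiffAt (hΩo.mem_nhds hy)).differentiableAt (by norm_num)
    have hv' : DifferentiableAt ℝ v y :=
      (hv.contDiffAt (hΩo.mem_nhds hy)).differentiableAt (by norm_num)
    have := (hu'.hasFDerivAt.add (hv'.hasFDerivAt.const_mul k)).fderiv
    have h2 : fderiv ℝ (fun y => u y + k * v y) y = fderiv ℝ u y + k • fderiv ℝ v y := this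
    rw [h2]
    simp
    ring
  rw [hev.fderiv_eq]
  have hU1 := differentiableAt_flux hΩo hU hUΩ ha hu hx e
  have hV1 := differentiableAt_flux hΩo hU hUΩ ha hv hx e
  have h3 : fderiv ℝ (fun y => a y * fderiv ℝ u y e + k * (a y * fderiv ℝ v y e)) x
      = fderiv ℝ (fun y => a y * fderiv ℝ u y e) x
        + k • fderiv ℝ (fun y => a y * fderiv ℝ v y e) x :=
    (hU1.hasFDerivAt.add (hV1.hasFDerivAt.const_mul k)).fderiv
  rw [h3]
  simp

/-- If some `∂ᵢ(a ∂ᵢw)` were positive at an interior maximum, where `∂ᵢw` vanishes, then `a ∂ᵢw`,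
hence `∂ᵢw`, would be positive just after it in direction `i`, and `w` would increase. -/
lemma divA_nonpos_of_isMax {Ω : Set (EuclideanSpace ℝ (Fin d))} (hΩo : IsOpen Ω)
    {a w : EuclideanSpace ℝ (Fin d) → ℝ} (hapos : ∀ x ∈ Ω, 0 < a x)
    (hw : DifferentiableOn ℝ w Ω) {y : EuclideanSpace ℝ (Fin d)} (hy : y ∈ Ω)
    (hmax : ∀ x ∈ Ω, w x ≤ w y) : divA a w y ≤ 0 := by
  unfold divA
  refine Finset.sum_nonpos fun i _ => ?_
  set e : EuclideanSpace ℝ (Fin d) := EuclideanSpace.single i (1 : ℝ)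
  by_contra! hpos
  set F : EuclideanSpace ℝ (Fin d) → ℝ := fun y => a y * fderiv ℝ w y e with hF
  -- The derivative of `F` is nonzero, so it is not a junk value.
  have hFd : DifferentiableAt ℝ F y := by
    by_contra hn
    rw [fderiv_zero_of_not_differentiableAt hn] at hpos
    simp at hpos
  have hgrad : fderiv ℝ w y = 0 := by
    apply IsLocalMax.fderiv_eq_zero
    filter_upwards [hΩo.mem_nhds hy] with x hx using hmax x hx
  have hline : ∀ t : ℝ, HasDerivAt (fun t : ℝ => y + t • e) e t := fun t => by
    simpa using ((hasDerivAt_id t).smul_const e).const_add y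
  have hG : HasDerivAt (fun t : ℝ => F (y + t • e)) (fderiv ℝ F y e) 0 := by
    have h0 : HasFDerivAt F (fderiv ℝ F y) (y + (0 : ℝ) • e) := by
      simpa using hFd.hasFDerivAt
    exact h0.comp_hasDerivAt (0 : ℝ) (hline 0)
  have hGpos : ∀ᶠ t in 𝓝[>] (0 : ℝ), 0 < F (y + t • e) := by
    have hs := hG.tendsto_slope.mono_left
      (nhdsWithin_mono (0 : ℝ) (fun t (ht : 0 < t) => ne_of_gt ht))
    filter_upwards [hs.eventually (lt_mem_nhds hpos), self_mem_nhdsWithin] with t ht ht0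
    have ht0' : (0 : ℝ) < t := ht0
    have hF0 : F y = 0 := by simp [hF, hgrad]
    simp only [slope_def_field, zero_smul, add_zero, hF0, sub_zero] at ht
    exact (div_pos_iff_of_pos_right ht0').1 ht
  have hΩt : ∀ᶠ t in 𝓝[>] (0 : ℝ), y + t • e ∈ Ω := by
    have hc : Tendsto (fun t : ℝ => y + t • e) (𝓝 0) (𝓝 y) := by
      simpa using (hline 0).continuousAt.tendsto
    exact (hc.eventually (hΩo.mem_nhds hy)).filter_mono nhdsWithin_le_nhds
  obtain ⟨δ, hδ, hδs⟩ := mem_nhdsGT_iff_exists_Ioc_subset.1 (hGpos.and hΩt)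
  have hδ0 : (0 : ℝ) < δ := hδ
  have hin : ∀ t ∈ Icc (0 : ℝ) δ, y + t • e ∈ Ω := by
    intro t ht
    rcases ht.1.eq_or_lt with h0 | h0
    · simpa [← h0] using hy
    · exact (hδs ⟨h0, ht.2⟩).2
  have hder : ∀ t ∈ Icc (0 : ℝ) δ,
      HasDerivAt (fun t : ℝ => w (y + t • e)) (fderiv ℝ w (y + t • e) e) t := by
    intro t ht
    have h0 := ((hw _ (hin t ht)).differentiableAt (hΩo.mem_nhds (hin t ht))).hasFDerivAt
    exact h0.comp_hasDerivAt t (hline t)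
  have hmono : StrictMonoOn (fun t : ℝ => w (y + t • e)) (Icc 0 δ) := by
    apply strictMonoOn_of_deriv_pos (convex_Icc 0 δ)
    · exact fun t ht => (hder t ht).continuousAt.continuousWithinAt
    · intro t ht
      rw [interior_Icc] at ht
      rw [(hder t ⟨ht.1.le, ht.2.le⟩).deriv]
      have hFt : 0 < F (y + t • e) := (hδs ⟨ht.1, ht.2.le⟩).1
      exact (pos_iff_pos_of_mul_pos hFt).1 (hapos _ (hin t ⟨ht.1.le, ht.2.le⟩))
  have hlt := hmono (left_mem_Icc.2 hδ0.le) (right_mem_Icc.2 hδ0.le) hδ0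
  simp only [zero_smul, add_zero] at hlt
  exact absurd (hmax _ (hin δ (right_mem_Icc.2 hδ0.le))) (not_le.2 hlt)

lemma divA_exp (a : EuclideanSpace ℝ (Fin d) → ℝ) (j : Fin d) (lam : ℝ)
    {x : EuclideanSpace ℝ (Fin d)} (ha : DifferentiableAt ℝ a x) :
    divA a (fun y => Real.exp (lam * y j)) x =
      lam * Real.exp (lam * x j) *
        (lam * a x + fderiv ℝ a x (EuclideanSpace.single j (1 : ℝ))) := by
  have hφ : ∀ y : EuclideanSpace ℝ (Fin d), HasFDerivAt
      (fun y : EuclideanSpace ℝ (Fin d) => Real.exp (lam * y j))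
      (Real.exp (lam * y j) • (lam • (EuclideanSpace.proj j : EuclideanSpace ℝ (Fin d) →L[ℝ] ℝ)))
      y := fun y =>
    (((EuclideanSpace.proj j : EuclideanSpace ℝ (Fin d) →L[ℝ] ℝ).hasFDerivAt (x := y)).const_mul
      lam).exp
  unfold divA
  rw [Finset.sum_eq_single j]
  · have hfun : (fun y => a y * fderiv ℝ (fun y : EuclideanSpace ℝ (Fin d) =>
        Real.exp (lam * y j)) y (EuclideanSpace.single j (1 : ℝ)))
        = fun y => a y * (lam * Real.exp (lam * y j)) := by
      funext y
      rw [(hφ y).fderiv]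
      simp [mul_comm]
    have hd := (ha.hasFDerivAt.mul ((hφ x).const_mul lam)).fderiv
    have hd' : fderiv ℝ (fun y => a y * (lam * Real.exp (lam * y j))) x = _ := hd
    rw [hfun, hd']
    simp
    ring
  · intro i _ hij
    have hfun : (fun y => a y * fderiv ℝ (fun y : EuclideanSpace ℝ (Fin d) =>
        Real.exp (lam * y j)) y (EuclideanSpace.single i (1 : ℝ))) = fun _ => (0 : ℝ) := by
      funext y
      rw [(hφ y).fderiv]
      simp [hij.symm]
    rw [hfun]
    simp
  · simp

/-- Weak maximum principle for `u₁ - u₂`, needing the differential inequality only where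
`u₁ > u₂`. -/
lemma weak_max_sub (hd : 1 ≤ d) {Ω U : Set (EuclideanSpace ℝ (Fin d))}
    (hΩo : IsOpen Ω) (hΩb : Bornology.IsBounded Ω) (hU : IsOpen U) (hUΩ : closure Ω ⊆ U)
    {a : EuclideanSpace ℝ (Fin d) → ℝ}
    (ha : ContDiffOn ℝ 1 a U) {a₀ : ℝ} (ha₀ : 0 < a₀) (halb : ∀ x ∈ Ω, a₀ ≤ a x)
    {u₁ u₂ : EuclideanSpace ℝ (Fin d) → ℝ}
    (h₁ : ContDiffOn ℝ 2 u₁ Ω) (h₂ : ContDiffOn ℝ 2 u₂ Ω)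
    (hc₁ : ContinuousOn u₁ (closure Ω)) (hc₂ : ContinuousOn u₂ (closure Ω))
    (hbd : ∀ x ∈ frontier Ω, u₁ x = u₂ x)
    (hsub : ∀ x ∈ Ω, u₂ x < u₁ x → divA a u₂ x ≤ divA a u₁ x) :
    ∀ x ∈ Ω, u₁ x ≤ u₂ x := by
  intro x₀ hx₀
  by_contra! hlt
  have hΩU : Ω ⊆ U := subset_closure.trans hUΩ
  have hK : IsCompact (closure Ω) := hΩb.isCompact_closure
  let j : Fin d := ⟨0, hd⟩
  obtain ⟨M, hM⟩ := hK.exists_bound_of_continuousOn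
    (((ha.continuousOn_fderiv_of_isOpen hU (by norm_num)).mono hUΩ).clm_apply
      (continuousOn_const (c := EuclideanSpace.single j (1 : ℝ))))
  have hM0 : 0 ≤ M := (norm_nonneg _).trans (hM x₀ (subset_closure hx₀))
  -- The choice `lam * a₀ = M + 1 > |∂ⱼa|` makes the barrier a strict subsolution.
  set lam : ℝ := (M + 1) / a₀ with hlam
  have hlam0 : 0 < lam := by positivity
  set φ : EuclideanSpace ℝ (Fin d) → ℝ := fun y => Real.exp (lam * y j) with hφ
  have hφ2 : ContDiff ℝ 2 φ :=
    (contDiff_const.mul (EuclideanSpace.proj j : EuclideanSpace ℝ (Fin d) →L[ℝ] ℝ).contDiff).exp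
  have hφpos : ∀ y, 0 < φ y := fun y => Real.exp_pos _
  have hφdiv : ∀ x ∈ Ω, 0 < divA a φ x := by
    intro x hx
    rw [hφ, divA_exp a j lam
      ((ha.contDiffAt (hU.mem_nhds (hΩU hx))).differentiableAt (by norm_num))]
    have hb := (abs_le.1 (hM x (subset_closure hx))).1
    have hla : M + 1 ≤ lam * a x := by
      calc M + 1 = lam * a₀ := by rw [hlam]; field_simp
        _ ≤ lam * a x := mul_le_mul_of_nonneg_left (halb x hx) hlam0.le
    exact mul_pos (mul_pos hlam0 (Real.exp_pos _)) (by linarith)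
  obtain ⟨B, hB⟩ := hK.exists_bound_of_continuousOn hφ2.continuous.continuousOn
  have hB' : ∀ x ∈ closure Ω, φ x ≤ B := fun x hx => (le_abs_self _).trans (hB x hx)
  have hB0 : 0 < B := (hφpos x₀).trans_le (hB' x₀ (subset_closure hx₀))
  set ε : ℝ := (u₁ x₀ - u₂ x₀) / B with hε
  have hε0 : 0 < ε := div_pos (by linarith) hB0
  have hεB : ε * B = u₁ x₀ - u₂ x₀ := by rw [hε]; field_simp
  set w : EuclideanSpace ℝ (Fin d) → ℝ := fun y => (u₁ y + (-1) * u₂ y) + ε * φ y with hw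
  have hsub2 : ContDiffOn ℝ 2 (fun y => u₁ y + (-1) * u₂ y) Ω := h₁.add (contDiffOn_const.mul h₂)
  have hw2 : ContDiffOn ℝ 2 w Ω := hsub2.add (contDiffOn_const.mul hφ2.contDiffOn)
  have hwc : ContinuousOn w (closure Ω) :=
    (hc₁.add (continuousOn_const.mul hc₂)).add
      (continuousOn_const.mul hφ2.continuous.continuousOn)
  obtain ⟨y, hy, hymax⟩ := hK.exists_isMaxOn ⟨x₀, subset_closure hx₀⟩ hwc
  -- The size of `ε` forces `u₁ > u₂` at the maximum point of `w`, so it is interior.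
  have hypos : u₂ y < u₁ y := by
    have h3 : w x₀ ≤ w y := hymax (subset_closure hx₀)
    have h4 : ε * φ y ≤ ε * B := mul_le_mul_of_nonneg_left (hB' y hy) hε0.le
    have h5 : 0 < ε * φ x₀ := mul_pos hε0 (hφpos x₀)
    simp only [hw] at h3
    linarith
  have hyΩ : y ∈ Ω := by
    by_contra hn
    have : y ∈ frontier Ω := by rw [hΩo.frontier_eq]; exact ⟨hy, hn⟩
    exact absurd (hbd y this) hypos.ne'
  have hle := divA_nonpos_of_isMax hΩo (fun x hx => ha₀.trans_le (halb x hx))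
    (hw2.differentiableOn (by norm_num)) hyΩ (fun x hx => hymax (subset_closure hx))
  rw [hw, divA_add_mul hΩo hU hΩU ha hsub2 hφ2.contDiffOn ε hyΩ,
    divA_add_mul hΩo hU hΩU ha h₁ h₂ (-1) hyΩ] at hle
  have h6 := hsub y hyΩ hypos
  have h7 := mul_pos hε0 (hφdiv y hyΩ)
  linarith

end Helpers

theorem stmt15 {d : ℕ} (hd : 1 ≤ d) (Ω U : Set (EuclideanSpace ℝ (Fin d)))
    (hΩo : IsOpen Ω) (hΩb : Bornology.IsBounded Ω)
    (hU : IsOpen U) (hUΩ : closure Ω ⊆ U)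
    (a b c : EuclideanSpace ℝ (Fin d) → ℝ)
    (ha : ContDiffOn ℝ 1 a U) (a₀ : ℝ) (ha₀ : 0 < a₀) (halb : ∀ x ∈ Ω, a₀ ≤ a x)
    (hbcont : ContinuousOn b (closure Ω)) (hccont : ContinuousOn c (closure Ω))
    (θ : ℝ) (hθ₁ : -1 < θ) (hθ₂ : θ < 0)
    (hbnn : ∀ x ∈ Ω, 0 ≤ b x) (hcnn : ∀ x ∈ Ω, 0 ≤ c x)
    (h : EuclideanSpace ℝ (Fin d) → ℝ)
    (Ψ : EuclideanSpace ℝ (Fin d) → ℝ)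
    (hΨ2 : ContDiffOn ℝ 2 Ψ Ω) (hΨ1 : ContDiffOn ℝ 1 Ψ (closure Ω))
    (hΨpos : ∀ x ∈ closure Ω, 0 < Ψ x)
    (hΨeq : ∀ x ∈ Ω, divA a Ψ x = b x * Ψ x + c x * Ψ x ^ (-θ))
    (hΨbd : ∀ x ∈ frontier Ω, Ψ x = h x)
    (Ψseq : ℕ → EuclideanSpace ℝ (Fin d) → ℝ)
    (hseq2 : ∀ n, ContDiffOn ℝ 2 (Ψseq n) Ω)
    (hseq1 : ∀ n, ContDiffOn ℝ 1 (Ψseq n) (closure Ω))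
    (hseqpos : ∀ n, ∀ x ∈ closure Ω, 0 < Ψseq n x)
    (hseq0 : ∀ x ∈ Ω, -divA a (Ψseq 0) x + b x * Ψseq 0 x = 0)
    (hseqn : ∀ n : ℕ, ∀ x ∈ Ω,
      -divA a (Ψseq (n + 1)) x + b x * Ψseq (n + 1) x
        + c x * (Ψseq n x) ^ (-(1 + θ)) * Ψseq (n + 1) x = 0)
    (hseqbd : ∀ n, ∀ x ∈ frontier Ω, Ψseq n x = h x) :
    (∀ n : ℕ, ∀ x ∈ Ω, Ψ x ≤ Ψseq (n + 1) x ∧ Ψseq (n + 1) x ≤ Ψseq n x) ∧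
      ∀ x ∈ Ω, ∃ L : ℝ, Ψ x ≤ L ∧
        Filter.Tendsto (fun n => Ψseq n x) Filter.atTop (nhds L) := by
  have hcl : Ω ⊆ closure Ω := subset_closure
  have cmp : ∀ u₁ u₂ : EuclideanSpace ℝ (Fin d) → ℝ, ContDiffOn ℝ 2 u₁ Ω → ContDiffOn ℝ 2 u₂ Ω →
      ContinuousOn u₁ (closure Ω) → ContinuousOn u₂ (closure Ω) →
      (∀ x ∈ frontier Ω, u₁ x = u₂ x) →
      (∀ x ∈ Ω, u₂ x < u₁ x → divA a u₂ x ≤ divA a u₁ x) → ∀ x ∈ Ω, u₁ x ≤ u₂ x :=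
    fun u₁ u₂ k₁ k₂ k₃ k₄ k₅ k₆ =>
      weak_max_sub hd hΩo hΩb hU hUΩ ha ha₀ halb k₁ k₂ k₃ k₄ k₅ k₆
  have hΨc := hΨ1.continuousOn
  have hsc := fun n => (hseq1 n).continuousOn
  have hanti : ∀ s t : ℝ, 0 < s → s ≤ t → t ^ (-(1 + θ)) ≤ s ^ (-(1 + θ)) := fun s t hs hst =>
    Real.rpow_le_rpow_of_nonpos hs hst (by linarith)
  -- Both orderings come from comparing zeroth-order terms `b s₁ + c q₁ s₁` and `b s₂ + c q₂ s₂`.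
  have key : ∀ x ∈ Ω, ∀ s₁ s₂ q₁ q₂ : ℝ, s₂ < s₁ → 0 ≤ s₁ → 0 ≤ q₂ → q₂ ≤ q₁ →
      b x * s₂ + c x * q₂ * s₂ ≤ b x * s₁ + c x * q₁ * s₁ := by
    intro x hx s₁ s₂ q₁ q₂ hs hs₁ hq₂ hq
    have e1 := mul_le_mul_of_nonneg_left hs.le (hbnn x hx)
    have e2 := mul_le_mul_of_nonneg_left hs.le (mul_nonneg (hcnn x hx) hq₂)
    have e3 := mul_le_mul_of_nonneg_right (mul_le_mul_of_nonneg_left hq (hcnn x hx)) hs₁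
    linarith
  have hΨeq' : ∀ x ∈ Ω, divA a Ψ x = b x * Ψ x + c x * Ψ x ^ (-(1 + θ)) * Ψ x := by
    intro x hx
    have hp := hΨpos x (hcl hx)
    have : Ψ x ^ (-θ) = Ψ x ^ (-(1 + θ)) * Ψ x := by
      rw [← Real.rpow_add_one hp.ne']
      congr 1
      ring
    rw [hΨeq x hx, this]
    ring
  have hlow : ∀ n : ℕ, ∀ x ∈ Ω, Ψ x ≤ Ψseq n x := by
    intro n
    induction n with
    | zero =>
      refine cmp Ψ (Ψseq 0) hΨ2 (hseq2 0) hΨc (hsc 0)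
        (fun x hx => (hΨbd x hx).trans (hseqbd 0 x hx).symm) fun x hx hlt => ?_
      have hp := hΨpos x (hcl hx)
      have e := key x hx _ _ (Ψ x ^ (-(1 + θ))) 0 hlt hp.le le_rfl (Real.rpow_nonneg hp.le _)
      have e0 := hseq0 x hx
      rw [hΨeq' x hx]
      linarith
    | succ n ih =>
      refine cmp Ψ (Ψseq (n + 1)) hΨ2 (hseq2 _) hΨc (hsc _)
        (fun x hx => (hΨbd x hx).trans (hseqbd _ x hx).symm) fun x hx hlt => ?_
      have hp := hΨpos x (hcl hx)
      have e := key x hx _ _ _ _ hlt hp.le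
        (Real.rpow_nonneg (hseqpos n x (hcl hx)).le (-(1 + θ))) (hanti _ _ hp (ih x hx))
      have e0 := hseqn n x hx
      rw [hΨeq' x hx]
      linarith
  have hdec : ∀ n : ℕ, ∀ x ∈ Ω, Ψseq (n + 1) x ≤ Ψseq n x := by
    intro n
    induction n with
    | zero =>
      refine cmp (Ψseq (0 + 1)) (Ψseq 0) (hseq2 _) (hseq2 0) (hsc _) (hsc 0)
        (fun x hx => (hseqbd _ x hx).trans (hseqbd 0 x hx).symm) fun x hx hlt => ?_
      have e := key x hx _ _ (Ψseq 0 x ^ (-(1 + θ))) 0 hlt (hseqpos _ x (hcl hx)).le le_rfl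
        (Real.rpow_nonneg (hseqpos 0 x (hcl hx)).le _)
      have e0 := hseq0 x hx
      have e1 := hseqn 0 x hx
      linarith
    | succ n ih =>
      refine cmp (Ψseq (n + 1 + 1)) (Ψseq (n + 1)) (hseq2 _) (hseq2 _) (hsc _) (hsc _)
        (fun x hx => (hseqbd _ x hx).trans (hseqbd _ x hx).symm) fun x hx hlt => ?_
      have e := key x hx _ _ _ _ hlt (hseqpos _ x (hcl hx)).le
        (Real.rpow_nonneg (hseqpos n x (hcl hx)).le (-(1 + θ)))
        (hanti _ _ (hseqpos (n + 1) x (hcl hx)) (ih x hx))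
      have e0 := hseqn n x hx
      have e1 := hseqn (n + 1) x hx
      linarith
  refine ⟨fun n x hx => ⟨hlow (n + 1) x hx, hdec n x hx⟩, fun x hx => ?_⟩
  have hbdd : BddBelow (range fun n => Ψseq n x) :=
    ⟨Ψ x, by rintro _ ⟨n, rfl⟩; exact hlow n x hx⟩
  exact ⟨⨅ n, Ψseq n x, le_ciInf fun n => hlow n x hx,
    tendsto_atTop_ciInf (antitone_nat_of_succ_le fun n => hdec n x hx) hbdd⟩
end

section
/- Assume θ ≥ 0, b ≥ 0 and c ≤ 0 on Ω. Let h be a boundary datum with h > 0 on ∂Ω, and let κ > 0 and ν := -θκ^{-(1+θ)}. Let Ψ ∈ C²(Ω) ∩ C¹(cl(Ω)) be a classical solution of ∇·(a∇Ψ) = bΨ + cΨ^{-θ} in Ω with Ψ = h on ∂Ω and Ψ ≥ κ on cl(Ω). Let Ψ₀ ∈ C²(Ω) ∩ C¹(cl(Ω)) satisfy -∇·(a∇Ψ₀) + bΨ₀ = 0 in Ω with Ψ₀ = h on ∂Ω and κ ≤ Ψ₀ ≤ Ψ on cl(Ω), and for each n ≥ 1 let Ψ_n ∈ C²(Ω)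 ∩ C¹(cl(Ω)) satisfy -∇·(a∇Ψ_n) + (b + cν)Ψ_n = -c(Ψ_{n-1}^{-θ} - νΨ_{n-1}) in Ω with Ψ_n = h on ∂Ω. Then for every n ≥ 0 one has κ ≤ Ψ_n ≤ Ψ_{n+1} ≤ Ψ in Ω; consequently, for every x ∈ Ω the sequence (Ψ_n(x)) is nondecreasing, bounded above by Ψ(x), and convergent. -/
/-!
Everything rests on a comparison principle for `L u = -∇·(a∇u) + q u` with `q ≥ 0`
(`le_of_operator_le`): if `L u ≤ L v` in `Ω` and `u ≤ v` on `∂Ω`, then `u ≤ v` in `Ω`.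
It is the classical weak maximum principle. Since `∇a` is bounded on the compact set `cl(Ω)` and
`a ≥ a₀ > 0`, the barrier `E(x) = exp(lam * x₁)` satisfies `∇·(a∇E) > 0` in `Ω` for `lam` large
(`divA_expBarrier_pos`). If `u - v` were positive somewhere, then for small `ε > 0` the function
`u - v + εE` would have an interior maximum at a point where `u - v > 0`; there
`∇·(a∇(u - v + εE)) ≤ 0` (`divA_nonpos_of_isLocalMax`), while the differential inequality
gives `∇·(a∇(u - v + εE)) ≥ q (u - v) + ε ∇·(a∇E) > 0`.

With `q = b + cν` (nonnegative because `c ≤ 0` and `ν ≤ 0`) the function `Ψ` satisfies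
`L Ψ = -c (Ψ^{-θ} - νΨ)`, while `L Ψ₀ = cνΨ₀ ≤ -c (Ψ₀^{-θ} - νΨ₀) = L Ψ₁`. As
`z ↦ z^{-θ} - νz` is nondecreasing on `[κ, ∞)` (`monotoneOn_source`), the comparison principle
propagates `κ ≤ Ψ_n ≤ Ψ_{n+1} ≤ Ψ` by induction on `n`.
-/

open Real Set MeasureTheory Filter Topology

/-- The product rule: `∂_i (a ∂_i u) = a ∂_i ∂_i u + ∂_i a ∂_i u`. -/
lemma divA_eq {d : ℕ} {a u : EuclideanSpace ℝ (Fin d) → ℝ} {x : EuclideanSpace ℝ (Fin d)}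
    (ha : DifferentiableAt ℝ a x) (hu : ContDiffAt ℝ 2 u x) :
    divA a u x = ∑ i : Fin d,
      (a x * fderiv ℝ (fun y => fderiv ℝ u y (EuclideanSpace.single i (1 : ℝ))) x
          (EuclideanSpace.single i (1 : ℝ))
        + fderiv ℝ a x (EuclideanSpace.single i (1 : ℝ))
          * fderiv ℝ u x (EuclideanSpace.single i (1 : ℝ))) := by
  unfold divA
  refine Finset.sum_congr rfl fun i _ => ?_
  have h1 : DifferentiableAt ℝ (fderiv ℝ u) x :=
    (hu.fderiv_right (m := 1) (by norm_num)).differentiableAt (by norm_num)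
  have h2 : DifferentiableAt ℝ (fun y => fderiv ℝ u y (EuclideanSpace.single i (1 : ℝ))) x :=
    h1.clm_apply (differentiableAt_const _)
  rw [fderiv_fun_mul ha h2]
  simp
  ring

lemma differentiableAt_mul_partial {d : ℕ} {a u : EuclideanSpace ℝ (Fin d) → ℝ}
    {x : EuclideanSpace ℝ (Fin d)} (ha : DifferentiableAt ℝ a x) (hu : ContDiffAt ℝ 2 u x)
    (e : EuclideanSpace ℝ (Fin d)) :
    DifferentiableAt ℝ (fun y => a y * fderiv ℝ u y e) x :=
  ha.mul (((hu.fderiv_right (m := 1) (by norm_num)).differentiableAt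
    (by norm_num)).clm_apply (differentiableAt_const _))

lemma eventually_differentiableAt {d : ℕ} {u : EuclideanSpace ℝ (Fin d) → ℝ}
    {x : EuclideanSpace ℝ (Fin d)} (hu : ContDiffAt ℝ 2 u x) :
    ∀ᶠ y in 𝓝 x, DifferentiableAt ℝ u y :=
  (hu.eventually (by simp)).mono fun _ hy => hy.differentiableAt (by norm_num)

lemma divA_add {d : ℕ} {a u v : EuclideanSpace ℝ (Fin d) → ℝ} {x : EuclideanSpace ℝ (Fin d)}
    (ha : DifferentiableAt ℝ a x) (hu : ContDiffAt ℝ 2 u x) (hv : ContDiffAt ℝ 2 v x) :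
    divA a (fun y => u y + v y) x = divA a u x + divA a v x := by
  unfold divA
  rw [← Finset.sum_add_distrib]
  refine Finset.sum_congr rfl fun i _ => ?_
  have heq : (fun y => a y * fderiv ℝ (fun y => u y + v y) y (EuclideanSpace.single i (1 : ℝ)))
      =ᶠ[𝓝 x] fun y => a y * fderiv ℝ u y (EuclideanSpace.single i (1 : ℝ))
        + a y * fderiv ℝ v y (EuclideanSpace.single i (1 : ℝ)) := by
    filter_upwards [eventually_differentiableAt hu, eventually_differentiableAt hv] with y h1 h2
    rw [fderiv_fun_add h1 h2]
    simp
    ring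
  rw [heq.fderiv_eq, fderiv_fun_add (differentiableAt_mul_partial ha hu _)
    (differentiableAt_mul_partial ha hv _)]
  simp

lemma divA_const_mul {d : ℕ} {a u : EuclideanSpace ℝ (Fin d) → ℝ} {x : EuclideanSpace ℝ (Fin d)}
    (ha : DifferentiableAt ℝ a x) (hu : ContDiffAt ℝ 2 u x) (r : ℝ) :
    divA a (fun y => r * u y) x = r * divA a u x := by
  unfold divA
  rw [Finset.mul_sum]
  refine Finset.sum_congr rfl fun i _ => ?_
  have heq : (fun y => a y * fderiv ℝ (fun y => r * u y) y (EuclideanSpace.single i (1 : ℝ)))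
      =ᶠ[𝓝 x] fun y => r * (a y * fderiv ℝ u y (EuclideanSpace.single i (1 : ℝ))) := by
    filter_upwards [eventually_differentiableAt hu] with y h1
    rw [fderiv_const_mul h1]
    simp
    ring
  rw [heq.fderiv_eq, fderiv_const_mul (differentiableAt_mul_partial ha hu _)]
  simp

/-- A positive second derivative at a critical point forces a local minimum; a function with both
a local maximum and a local minimum at the same point is constant near it, so its second
derivative there vanishes. -/
lemma deriv_deriv_nonpos_of_isLocalMax {g : ℝ → ℝ} {t : ℝ} (hmax : IsLocalMax g t)
    (hc : ContinuousAt g t) : deriv (deriv g) t ≤ 0 := by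
  by_contra! hpos
  have hmin := isLocalMin_of_deriv_deriv_pos hpos hmax.deriv_eq_zero hc
  have heq : g =ᶠ[𝓝 t] fun _ => g t := by
    filter_upwards [hmax, hmin] with s h1 h2 using le_antisymm h1 h2
  have h2 := heq.deriv.deriv_eq
  simp at h2
  linarith

lemma divA_nonpos_of_isLocalMax {d : ℕ} {a u : EuclideanSpace ℝ (Fin d) → ℝ}
    {x : EuclideanSpace ℝ (Fin d)} (ha : DifferentiableAt ℝ a x) (hapos : 0 ≤ a x)
    (hu : ContDiffAt ℝ 2 u x) (hmax : IsLocalMax u x) : divA a u x ≤ 0 := by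
  rw [divA_eq ha hu]
  refine Finset.sum_nonpos fun i _ => ?_
  set e : EuclideanSpace ℝ (Fin d) := EuclideanSpace.single i (1 : ℝ) with he
  rw [hmax.fderiv_eq_zero]
  have hline : ∀ t : ℝ, HasDerivAt (fun t : ℝ => x + t • e) e t := fun t => by
    simpa using ((hasDerivAt_id t).smul_const e).const_add x
  have hx0 : x + (0 : ℝ) • e = x := by simp
  have htend : Tendsto (fun t : ℝ => x + t • e) (𝓝 0) (𝓝 x) := by
    simpa [ContinuousAt] using (hline 0).continuousAt
  have hD : DifferentiableAt ℝ (fun y => fderiv ℝ u y e) x :=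
    ((hu.fderiv_right (m := 1) (by norm_num)).differentiableAt
      (by norm_num)).clm_apply (differentiableAt_const _)
  have hd1 : deriv (fun t : ℝ => u (x + t • e)) =ᶠ[𝓝 0] fun t => fderiv ℝ u (x + t • e) e := by
    filter_upwards [htend.eventually (eventually_differentiableAt hu)] with t ht
    exact (ht.hasFDerivAt.comp_hasDerivAt t (hline t)).deriv
  have hd2 : deriv (deriv (fun t : ℝ => u (x + t • e))) 0
      = fderiv ℝ (fun y => fderiv ℝ u y e) x e := by
    rw [hd1.deriv_eq]
    have := hD.hasFDerivAt
    rw [← hx0] at this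
    have h3 := (this.comp_hasDerivAt 0 (hline 0)).deriv
    rw [hx0] at h3
    exact h3
  have hgmax : IsLocalMax (fun t : ℝ => u (x + t • e)) 0 := by
    have := htend.eventually hmax
    filter_upwards [this] with t ht
    simpa using ht
  have hgc : ContinuousAt (fun t : ℝ => u (x + t • e)) 0 := by
    have := hu.continuousAt.tendsto.comp htend
    simpa [ContinuousAt, Function.comp_def] using this
  have := deriv_deriv_nonpos_of_isLocalMax hgmax hgc
  rw [hd2] at this
  simpa using mul_nonpos_of_nonneg_of_nonpos hapos this

/-- The barrier `x ↦ exp (lam * x_j)` of the weak maximum principle. -/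
noncomputable def expBarrier {d : ℕ} (lam : ℝ) (j : Fin d)
    (x : EuclideanSpace ℝ (Fin d)) : ℝ := exp (lam * x j)

lemma contDiff_expBarrier {d : ℕ} (lam : ℝ) (j : Fin d) :
    ContDiff ℝ 2 (expBarrier lam j) := by
  unfold expBarrier
  have : ContDiff ℝ 2 (fun x : EuclideanSpace ℝ (Fin d) => x j) :=
    (EuclideanSpace.proj (𝕜 := ℝ) j).contDiff
  exact (contDiff_const.mul this).exp

lemma fderiv_expBarrier {d : ℕ} (lam : ℝ) (j i : Fin d) (x : EuclideanSpace ℝ (Fin d)) :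
    fderiv ℝ (expBarrier lam j) x (EuclideanSpace.single i (1 : ℝ))
      = (if j = i then lam else 0) * expBarrier lam j x := by
  have h1 : HasFDerivAt (fun x : EuclideanSpace ℝ (Fin d) => x j)
      (EuclideanSpace.proj (𝕜 := ℝ) j : EuclideanSpace ℝ (Fin d) →L[ℝ] ℝ) x :=
    (EuclideanSpace.proj (𝕜 := ℝ) j).hasFDerivAt
  have h2 := (h1.const_mul lam).exp
  have h3 : fderiv ℝ (expBarrier lam j) x = _ := h2.fderiv
  rw [h3]
  by_cases hij : j = i <;> simp [expBarrier, hij, mul_comm]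

/-- Explicitly, `∇·(a∇E) = lam E (lam a + ∂_j a)`. -/
lemma divA_expBarrier_pos {d : ℕ} {a : EuclideanSpace ℝ (Fin d) → ℝ}
    {x : EuclideanSpace ℝ (Fin d)} (ha : DifferentiableAt ℝ a x) {lam : ℝ} (hlam : 0 < lam)
    (j : Fin d)
    (hpos : 0 < lam * a x + fderiv ℝ a x (EuclideanSpace.single j (1 : ℝ))) :
    0 < divA a (expBarrier lam j) x := by
  have hE := contDiff_expBarrier lam j
  have hEpos : 0 < expBarrier lam j x := exp_pos _
  rw [divA_eq ha hE.contDiffAt, Finset.sum_eq_single j]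
  · simp only [fderiv_expBarrier, if_true]
    rw [fderiv_const_mul (hE.differentiable (by norm_num) x)]
    simp only [smul_apply, fderiv_expBarrier, if_true, smul_eq_mul]
    have := mul_pos (mul_pos hlam hEpos) hpos
    nlinarith
  · intro i _ hi
    simp [fderiv_expBarrier, hi.symm]
  · simp

/-- Comparison principle for `u ↦ -∇·(a∇u) + q u` with `q ≥ 0`. -/
lemma le_of_operator_le {d : ℕ} (hd : 1 ≤ d) {Ω U : Set (EuclideanSpace ℝ (Fin d))}
    (hΩo : IsOpen Ω) (hΩb : Bornology.IsBounded Ω) (hU : IsOpen U) (hUΩ : closure Ω ⊆ U)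
    {a q u v : EuclideanSpace ℝ (Fin d) → ℝ}
    (ha : ContDiffOn ℝ 1 a U) {a₀ : ℝ} (ha₀ : 0 < a₀) (halb : ∀ x ∈ Ω, a₀ ≤ a x)
    (hq : ∀ x ∈ Ω, 0 ≤ q x)
    (hu2 : ContDiffOn ℝ 2 u Ω) (hv2 : ContDiffOn ℝ 2 v Ω)
    (hu : ContinuousOn u (closure Ω)) (hv : ContinuousOn v (closure Ω))
    (hbd : ∀ x ∈ frontier Ω, u x ≤ v x)
    (hop : ∀ x ∈ Ω, -divA a u x + q x * u x ≤ -divA a v x + q x * v x) :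
    ∀ x ∈ Ω, u x ≤ v x := by
  intro x₀ hx₀
  by_contra! hlt
  have hK : IsCompact (closure Ω) := hΩb.isCompact_closure
  let j : Fin d := ⟨0, hd⟩
  have hadiff : ∀ x ∈ Ω, DifferentiableAt ℝ a x := fun x hx =>
    (ha.contDiffAt (hU.mem_nhds (hUΩ (subset_closure hx)))).differentiableAt (by norm_num)
  obtain ⟨M, hM⟩ := hK.exists_bound_of_continuousOn
    (f := fun x => fderiv ℝ a x (EuclideanSpace.single j (1 : ℝ)))
    (((ha.continuousOn_fderiv_of_isOpen hU le_rfl).mono hUΩ).clm_apply continuousOn_const)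
  have hM0 : 0 ≤ M := (norm_nonneg _).trans (hM x₀ (subset_closure hx₀))
  -- large enough that `lam * a₀ = M + 1` dominates the drift term
  set lam : ℝ := (M + 1) / a₀ with hlam_def
  have hlam : 0 < lam := by positivity
  have hlama : lam * a₀ = M + 1 := by rw [hlam_def]; field_simp
  set E := expBarrier lam j with hE_def
  have hEc : ContDiff ℝ 2 E := contDiff_expBarrier lam j
  have hEdiv : ∀ x ∈ Ω, 0 < divA a E x := fun x hx => by
    refine divA_expBarrier_pos (hadiff x hx) hlam j ?_
    have h1 := (abs_le.1 (hM x (subset_closure hx))).1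
    have h2 := mul_le_mul_of_nonneg_left (halb x hx) hlam.le
    linarith
  have hEpos : ∀ x, 0 < E x := fun x => exp_pos _
  obtain ⟨B, hB⟩ := hK.exists_bound_of_continuousOn hEc.continuous.continuousOn
  have hB' : ∀ x ∈ closure Ω, E x ≤ B := fun x hx => (le_abs_self _).trans (hB x hx)
  have hB0 : 0 < B := (hEpos x₀).trans_le (hB' x₀ (subset_closure hx₀))
  -- small enough that `ε E` stays below the assumed positive value of `u - v` at `x₀`
  set ε : ℝ := (u x₀ - v x₀) / B with hε_def
  have hε : 0 < ε := div_pos (by linarith) hB0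
  have hεB : ε * B = u x₀ - v x₀ := by rw [hε_def]; field_simp
  obtain ⟨y, hyK, hymax⟩ := hK.exists_isMaxOn ⟨x₀, subset_closure hx₀⟩
    ((hu.add (continuousOn_const.mul hv (f := fun _ => (-1 : ℝ)))).add
      (continuousOn_const.mul hEc.continuous.continuousOn (f := fun _ => ε)))
  have hyuv : v y < u y := by
    have h1 : u x₀ + -1 * v x₀ + ε * E x₀ ≤ u y + -1 * v y + ε * E y :=
      hymax (subset_closure hx₀)
    have h2 := mul_le_mul_of_nonneg_left (hB' y hyK) hε.le
    have h3 := mul_pos hε (hEpos x₀)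
    linarith
  have hyΩ : y ∈ Ω := by
    by_contra hy
    exact absurd (hbd y ⟨hyK, by rwa [hΩo.interior_eq]⟩) (not_le.2 hyuv)
  have hnh := hΩo.mem_nhds hyΩ
  have hlocmax : IsLocalMax (fun x => (u x + -1 * v x) + ε * E x) y :=
    hymax.isLocalMax (mem_of_superset hnh subset_closure)
  have huy := hu2.contDiffAt hnh
  have hvy := hv2.contDiffAt hnh
  have hv' : ContDiffAt ℝ 2 (fun x => -1 * v x) y := contDiffAt_const.mul hvy
  have hE' : ContDiffAt ℝ 2 (fun x => ε * E x) y := contDiffAt_const.mul hEc.contDiffAt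
  have hay := hadiff y hyΩ
  have hle := divA_nonpos_of_isLocalMax hay (ha₀.le.trans (halb y hyΩ))
    ((huy.add hv').add hE') hlocmax
  have hsum : divA a (fun x => (u x + -1 * v x) + ε * E x) y
      = divA a u y + -1 * divA a v y + ε * divA a E y := by
    rw [divA_add hay (huy.add hv') hE', divA_add hay huy hv', divA_const_mul hay hvy,
      divA_const_mul hay hEc.contDiffAt]
  rw [hsum] at hle
  have h1 := hop y hyΩ
  have h2 := mul_pos hε (hEdiv y hyΩ)
  have h3 := mul_nonneg (hq y hyΩ) (sub_nonneg.2 hyuv.le)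
  linarith

/-- The value `ν = -θ κ^{-(1+θ)}` is the derivative of `z ↦ z^{-θ}` at `κ`, the least value of
that derivative on `[κ, ∞)`. -/
lemma monotoneOn_source {θ κ ν : ℝ} (hθ : 0 ≤ θ) (hκ : 0 < κ)
    (hν : ν = -θ * κ ^ (-(1 + θ))) :
    MonotoneOn (fun z : ℝ => z ^ (-θ) - ν * z) (Ici κ) := by
  have hder : ∀ z ∈ Ici κ, HasDerivAt (fun z : ℝ => z ^ (-θ) - ν * z)
      (-θ * z ^ (-θ - 1) - ν * 1) z := fun z hz =>
    (hasDerivAt_rpow_const (Or.inl (hκ.trans_le hz).ne')).sub ((hasDerivAt_id z).const_mul ν)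
  refine monotoneOn_of_deriv_nonneg (convex_Ici κ)
    (fun z hz => (hder z hz).continuousAt.continuousWithinAt)
    (fun z hz => (hder z (interior_subset hz)).differentiableAt.differentiableWithinAt) ?_
  intro z hz
  have hz' : κ ≤ z := interior_subset hz
  rw [(hder z hz').deriv, hν, show -(1 + θ) = -θ - 1 by ring]
  have h1 : z ^ (-θ - 1) ≤ κ ^ (-θ - 1) :=
    rpow_le_rpow_of_nonpos hκ hz' (by linarith)
  nlinarith [mul_le_mul_of_nonneg_left h1 hθ]

theorem stmt17 {d : ℕ} (hd : 1 ≤ d) (Ω U : Set (EuclideanSpace ℝ (Fin d)))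
    (hΩo : IsOpen Ω) (hΩb : Bornology.IsBounded Ω)
    (hU : IsOpen U) (hUΩ : closure Ω ⊆ U)
    (a b c : EuclideanSpace ℝ (Fin d) → ℝ)
    (ha : ContDiffOn ℝ 1 a U) (a₀ : ℝ) (ha₀ : 0 < a₀) (halb : ∀ x ∈ Ω, a₀ ≤ a x)
    (hbcont : ContinuousOn b (closure Ω)) (hccont : ContinuousOn c (closure Ω))
    (θ : ℝ) (hθ : 0 ≤ θ)
    (hbnn : ∀ x ∈ Ω, 0 ≤ b x) (hcnp : ∀ x ∈ Ω, c x ≤ 0)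
    (h : EuclideanSpace ℝ (Fin d) → ℝ) (hhpos : ∀ x ∈ frontier Ω, 0 < h x)
    (κ : ℝ) (hκ : 0 < κ) (ν : ℝ) (hν : ν = -θ * κ ^ (-(1 + θ)))
    (Ψ : EuclideanSpace ℝ (Fin d) → ℝ)
    (hΨ2 : ContDiffOn ℝ 2 Ψ Ω) (hΨ1 : ContDiffOn ℝ 1 Ψ (closure Ω))
    (hΨlb : ∀ x ∈ closure Ω, κ ≤ Ψ x)
    (hΨeq : ∀ x ∈ Ω, divA a Ψ x = b x * Ψ x + c x * Ψ x ^ (-θ))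
    (hΨbd : ∀ x ∈ frontier Ω, Ψ x = h x)
    (Ψseq : ℕ → EuclideanSpace ℝ (Fin d) → ℝ)
    (hseq2 : ∀ n, ContDiffOn ℝ 2 (Ψseq n) Ω)
    (hseq1 : ∀ n, ContDiffOn ℝ 1 (Ψseq n) (closure Ω))
    (hseq0 : ∀ x ∈ Ω, -divA a (Ψseq 0) x + b x * Ψseq 0 x = 0)
    (hseq0bounds : ∀ x ∈ closure Ω, κ ≤ Ψseq 0 x ∧ Ψseq 0 x ≤ Ψ x)
    (hseqn : ∀ n : ℕ, ∀ x ∈ Ω,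
      -divA a (Ψseq (n + 1)) x + (b x + c x * ν) * Ψseq (n + 1) x
        = -c x * ((Ψseq n x) ^ (-θ) - ν * Ψseq n x))
    (hseqbd : ∀ n, ∀ x ∈ frontier Ω, Ψseq n x = h x) :
    (∀ n : ℕ, ∀ x ∈ Ω,
      κ ≤ Ψseq n x ∧ Ψseq n x ≤ Ψseq (n + 1) x ∧ Ψseq (n + 1) x ≤ Ψ x) ∧
      ∀ x ∈ Ω, ∃ L : ℝ, L ≤ Ψ x ∧
        Filter.Tendsto (fun n => Ψseq n x) Filter.atTop (nhds L) := by
  have hν0 : ν ≤ 0 := by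
    rw [hν, neg_mul]
    exact neg_nonpos.2 (mul_nonneg hθ (rpow_nonneg hκ.le _))
  have hq : ∀ x ∈ Ω, 0 ≤ b x + c x * ν := fun x hx =>
    add_nonneg (hbnn x hx) (mul_nonneg_of_nonpos_of_nonpos (hcnp x hx) hν0)
  have hmono := monotoneOn_source hθ hκ hν
  have comparison : ∀ u v : EuclideanSpace ℝ (Fin d) → ℝ, ContDiffOn ℝ 2 u Ω →
      ContDiffOn ℝ 2 v Ω → ContDiffOn ℝ 1 u (closure Ω) → ContDiffOn ℝ 1 v (closure Ω) →
      (∀ x ∈ frontier Ω, u x = h x) → (∀ x ∈ frontier Ω, v x = h x) →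
      (∀ x ∈ Ω, -divA a u x + (b x + c x * ν) * u x ≤ -divA a v x + (b x + c x * ν) * v x) →
      ∀ x ∈ Ω, u x ≤ v x := fun u v hu2 hv2 hu1 hv1 hub hvb hop =>
    le_of_operator_le (q := fun x => b x + c x * ν) hd hΩo hΩb hU hUΩ ha ha₀ halb hq hu2 hv2
      hu1.continuousOn hv1.continuousOn (fun x hx => (hub x hx).trans_le (hvb x hx).ge) hop
  have source_le : ∀ x ∈ Ω, ∀ s t : ℝ, κ ≤ s → s ≤ t →
      -c x * (s ^ (-θ) - ν * s) ≤ -c x * (t ^ (-θ) - ν * t) := fun x hx s t hs hst =>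
    mul_le_mul_of_nonneg_left (hmono hs (hs.trans hst : κ ≤ t) hst) (neg_nonneg.2 (hcnp x hx))
  have le_sol : ∀ n, (∀ x ∈ Ω, κ ≤ Ψseq n x ∧ Ψseq n x ≤ Ψ x) →
      ∀ x ∈ Ω, Ψseq (n + 1) x ≤ Ψ x := by
    intro n hn
    refine comparison _ _ (hseq2 _) hΨ2 (hseq1 _) hΨ1 (hseqbd _) hΨbd fun x hx => ?_
    rw [hseqn n x hx, hΨeq x hx]
    have := source_le x hx _ _ (hn x hx).1 (hn x hx).2
    linarith
  have main : ∀ n : ℕ, ∀ x ∈ Ω,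
      κ ≤ Ψseq n x ∧ Ψseq n x ≤ Ψseq (n + 1) x ∧ Ψseq (n + 1) x ≤ Ψ x := by
    intro n
    induction n with
    | zero =>
      have hb0 : ∀ x ∈ Ω, κ ≤ Ψseq 0 x ∧ Ψseq 0 x ≤ Ψ x := fun x hx =>
        hseq0bounds x (subset_closure hx)
      have h01 : ∀ x ∈ Ω, Ψseq 0 x ≤ Ψseq (0 + 1) x := by
        refine comparison _ _ (hseq2 _) (hseq2 _) (hseq1 _) (hseq1 _) (hseqbd _) (hseqbd _)
          fun x hx => ?_
        rw [hseqn 0 x hx]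
        have h1 := hseq0 x hx
        have h2 := mul_nonneg (neg_nonneg.2 (hcnp x hx))
          (rpow_nonneg (hκ.le.trans (hb0 x hx).1) (-θ))
        linarith
      exact fun x hx => ⟨(hb0 x hx).1, h01 x hx, le_sol 0 hb0 x hx⟩
    | succ n ih =>
      have hbn : ∀ x ∈ Ω, κ ≤ Ψseq (n + 1) x ∧ Ψseq (n + 1) x ≤ Ψ x := fun x hx =>
        ⟨(ih x hx).1.trans (ih x hx).2.1, (ih x hx).2.2⟩
      have hstep : ∀ x ∈ Ω, Ψseq (n + 1) x ≤ Ψseq (n + 1 + 1) x := by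
        refine comparison _ _ (hseq2 _) (hseq2 _) (hseq1 _) (hseq1 _) (hseqbd _) (hseqbd _)
          fun x hx => ?_
        rw [hseqn n x hx, hseqn (n + 1) x hx]
        exact source_le x hx _ _ (ih x hx).1 (ih x hx).2.1
      exact fun x hx => ⟨(hbn x hx).1, hstep x hx, le_sol (n + 1) hbn x hx⟩
  refine ⟨main, fun x hx => ?_⟩
  have hbound : ∀ n, Ψseq n x ≤ Ψ x := fun n => (main n x hx).2.1.trans (main n x hx).2.2
  exact ⟨⨆ n, Ψseq n x, ciSup_le hbound,
    tendsto_atTop_ciSup (monotone_nat_of_le_succ fun n => (main n x hx).2.1)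
      ⟨Ψ x, by rintro _ ⟨n, rfl⟩; exact hbound n⟩⟩
end
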